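/- arXiv:1806.08351 — 2 statements merged into one kernel-verified Lean document; each statement's English description precedes it below -/
import Mathlib

section
/- Dedekind sum identity for ℓ-reflexive polygons: Let ℓ > 1 be an integer and Q ⊆ ℝ² an ℓ-reflexive polygon with respect to ℤ², with vertices n₁, …, n_ν ∈ ℤ² listed in anticlockwise order: the extreme points of Q are exactly n₁, …, n_ν, pairwise distinct, and, with indices read modulo ν, det(n_i, n_{i+1}) > 0 and conv{n_i, n_{i+1}} is an edge of Q for every i. Set q_i := det(n_i, n_{i+1}), and suppose that for each i there are p_i ∈ ℤ and w_i ∈ ℤ² with 0 ≤ p_i < q_i, (n_i, w_i) a ℤ-basis of ℤ², and n_{i+1} = p_i·n_i + q_i·w_i. Then, as an identity of rational numbers, 12·Σ_{i=1}^{ν} DS(p_i, q_i) = 12 − 3ν + Σ_{i=1}^{ν} det(n_i, n_{i+2})/(q_i·q_{i+1}). -/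
/-!
The proof works with the Rademacher function `Φ` on `SL₂(ℤ)`, which sends `(a, b; c, d)` with
`c ≠ 0` to `(a + d) / c - 12 * sign c * s(a, |c|)`, where `s` is the Dedekind sum. It is a
homomorphism up to signs (`rademacher_mul`):
`Φ(M N) = Φ(M) + Φ(N) - 3 * sign (c_M * c_N * c_{MN})`,
where `c` denotes the lower-left entry. For `M` one of the generators `S`, `T` this is the
reciprocity law `dedekind_reciprocity`, respectively the periodicity of the Dedekind sum; it extends
to all `M` because the sign term is a 2-cocycle (`sign_cocycle`), a consequence of the Plücker
relation between the determinants of four plane vectors.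

Let `A i` have columns `n i`, `w i`. Then `B i = (A i)⁻¹ * A (i + 1)` has first column `(p i, q i)`
and lower-right entry `det (n i, w (i + 1))`, so `Φ(B i)` is `-12 * s(p i, q i)` plus a rational
term, and `det (n i, n (i + 2)) = p (i + 1) * q i + q (i + 1) * det (n i, w (i + 1))` shows that
these rational terms add up to the sum on the right-hand side of the identity.

Choose `N` such that no vertex lies on the line `ℝ (1, N)`, and let `E` be the shear taking `(1, N)`
to `(1, 0)`, so that `E * A i` has lower-left entry `d i = det ((1, N), n i) ≠ 0`. Applying the
formula to `E * A (i + 1) = (E * A i) * B i` and summing over the cycle, the values `Φ(E * A i)`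
cancel and there remains `∑ Φ(B i) = 3 * ∑ sign (d i * d (i + 1))`. The boundary of the polygon
crosses the line exactly twice, so the last sum is `ν - 4`, which is the claim. Each of the two rays
is crossed at most once because the segments `[n i, n (i + 1)]` are faces with vertices as endpoints
(`cone_unique`). If the line were not crossed at all, the positive numbers
`q i / (d i * d (i + 1))` would telescope to zero.
-/

open Set

noncomputable section

abbrev V : Type := ℝ × ℝ

/-- Standard inner product on ℝ². -/
def dotV (x y : V) : ℝ := x.1 * y.1 + x.2 * y.2

/-- The standard lattice ℤ² viewed inside ℝ². -/
def latticePts : Set V := {x : V | ∃ p : ℤ × ℤ, x = ((p.1 : ℝ), (p.2 : ℝ))}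

/-- A polygon: convex hull of a finite set of points that affinely spans ℝ². -/
def IsPolygon (Q : Set V) : Prop :=
  ∃ A : Finset V, Q = convexHull ℝ (A : Set V) ∧ affineSpan ℝ (A : Set V) = ⊤

/-- An edge of `Q`: a one-dimensional face, i.e. the argmin set of some nonzero
linear functional, containing more than one point. -/
def IsEdge (Q F : Set V) : Prop :=
  (∃ η : V, η ≠ 0 ∧ F = {y ∈ Q | ∀ z ∈ Q, dotV η y ≤ dotV η z}) ∧
    ∃ y₁ ∈ F, ∃ y₂ ∈ F, y₁ ≠ y₂

/-- A primitive lattice point: the only lattice points on the segment `conv {0, v}`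
are `0` and `v`. -/
def IsPrimitive (v : V) : Prop :=
  v ∈ latticePts ∧ v ≠ 0 ∧ segment ℝ (0 : V) v ∩ latticePts = {(0 : V), v}

/-- An ℓ-reflexive polygon with respect to ℤ². -/
structure IsLReflexive (ℓ : ℕ) (Q : Set V) : Prop where
  polygon : IsPolygon Q
  vertices_primitive : ∀ v ∈ Set.extremePoints ℝ Q, IsPrimitive v
  zero_mem_interior : (0 : V) ∈ interior Q
  edge_cond : ∀ F, IsEdge Q F →
    ∃ η : V, IsPrimitive η ∧ F ⊆ {y : V | dotV η y = -(ℓ : ℝ)}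

/-- The polar polygon `Q° = {x | ⟨x,y⟩ ≥ -1 for all y ∈ Q}`. -/
def polarPolygon (Q : Set V) : Set V := {x : V | ∀ y ∈ Q, -1 ≤ dotV x y}

/-- The dual of an ℓ-reflexive polygon: `Q* = ℓ·Q°`. -/
def dualPolygon (ℓ : ℕ) (Q : Set V) : Set V := (fun x : V => (ℓ : ℝ) • x) '' polarPolygon Q

/-- The real embedding of an integer point. -/
def realVec (p : ℤ × ℤ) : V := ((p.1 : ℝ), (p.2 : ℝ))

/-- `det(a,b) = a₁b₂ − a₂b₁` for integer points. -/
def detZ (a b : ℤ × ℤ) : ℤ := a.1 * b.2 - a.2 * b.1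

/-- `(u,w)` is a ℤ-basis of ℤ². -/
def IsZBasis (u w : ℤ × ℤ) : Prop :=
  ∀ v : ℤ × ℤ, ∃! ab : ℤ × ℤ, v = ab.1 • u + ab.2 • w

/-- The sawtooth function `((x))`. -/
def sawtooth (x : ℚ) : ℚ := if x.den = 1 then 0 else x - (⌊x⌋ : ℚ) - 1 / 2

/-- The Dedekind sum `DS(p,q) = Σ_{ι=1}^{q−1} ((ι/q))·((pι/q))`. -/
def dedekindSum (p q : ℤ) : ℚ :=
  ∑ ι ∈ Finset.Icc (1 : ℤ) (q - 1), sawtooth ((ι : ℚ) / (q : ℚ)) * sawtooth ((p * ι : ℚ) / (q : ℚ))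

/-! ### Dedekind sums and the reciprocity law -/

lemma sawtooth_of_dvd (a : ℤ) (k : ℕ) (hk : 0 < k) (h : (k : ℤ) ∣ a) :
    sawtooth ((a : ℚ) / k) = 0 := by
  obtain ⟨m, rfl⟩ := h
  have hk' : (k : ℚ) ≠ 0 := by positivity
  have : (((k : ℤ) * m : ℤ) : ℚ) / k = (m : ℚ) := by push_cast; field_simp
  rw [this]; simp [sawtooth]

lemma sawtooth_of_not_dvd (a : ℤ) (k : ℕ) (hk : 0 < k) (h : ¬ (k : ℤ) ∣ a) :
    sawtooth ((a : ℚ) / k) = ((a % k : ℤ) : ℚ) / k - 1 / 2 := by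
  have hk' : (k : ℚ) ≠ 0 := by positivity
  have hden : ((a : ℚ) / k).den ≠ 1 := by
    intro h1
    apply h
    obtain ⟨m, hm⟩ : ∃ m : ℤ, (m : ℚ) = (a : ℚ) / k := ⟨_, Rat.coe_int_num_of_den_eq_one h1⟩
    refine ⟨m, ?_⟩
    have : (a : ℚ) = k * m := by rw [hm]; field_simp
    exact_mod_cast this
  have hfl : ⌊(a : ℚ) / k⌋ = a / k := Rat.floor_intCast_div_natCast a k
  have hm : (a : ℚ) = k * (a / k : ℤ) + (a % k : ℤ) := by
    exact_mod_cast (Int.mul_ediv_add_emod a k).symm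
  rw [sawtooth, if_neg hden, hfl]
  nth_rewrite 1 [hm]
  field_simp
  ring

lemma sawtooth_congr {a b : ℤ} (k : ℕ) (hk : 0 < k) (h : a % k = b % k) :
    sawtooth ((a : ℚ) / k) = sawtooth ((b : ℚ) / k) := by
  by_cases ha : (k : ℤ) ∣ a
  · have hb : (k : ℤ) ∣ b := by
      rw [Int.dvd_iff_emod_eq_zero] at *; omega
    rw [sawtooth_of_dvd a k hk ha, sawtooth_of_dvd b k hk hb]
  · have hb : ¬ (k : ℤ) ∣ b := by
      rw [Int.dvd_iff_emod_eq_zero] at *; omega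
    rw [sawtooth_of_not_dvd a k hk ha, sawtooth_of_not_dvd b k hk hb, h]

lemma sawtooth_neg (a : ℤ) (k : ℕ) (hk : 0 < k) :
    sawtooth (((-a : ℤ) : ℚ) / k) = -sawtooth ((a : ℚ) / k) := by
  have hk' : (k : ℚ) ≠ 0 := by positivity
  by_cases ha : (k : ℤ) ∣ a
  · rw [sawtooth_of_dvd a k hk ha, sawtooth_of_dvd (-a) k hk (by simpa using ha), neg_zero]
  · rw [sawtooth_of_not_dvd a k hk ha, sawtooth_of_not_dvd (-a) k hk (by simpa using ha)]
    have : (-a) % (k : ℤ) = k - a % k := by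
      rw [Int.neg_emod, if_neg ha]; simp
    rw [this]
    push_cast
    field_simp
    ring

lemma dedekindSum_eq_range (p : ℤ) (k : ℕ) : dedekindSum p k =
    ∑ i ∈ Finset.range k, sawtooth (((i : ℤ) : ℚ) / k) * sawtooth (((p * i : ℤ) : ℚ) / k) := by
  rcases Nat.eq_zero_or_pos k with rfl | hk
  · simp [dedekindSum]
  have h0 : sawtooth 0 = 0 := by simp [sawtooth]
  obtain ⟨m, rfl⟩ : ∃ m, k = m + 1 := ⟨k - 1, by omega⟩
  rw [Finset.sum_range_succ', dedekindSum]
  simp only [Nat.cast_zero, Int.cast_zero, zero_div, h0, zero_mul, add_zero]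
  symm
  refine Finset.sum_bij (fun i _ => ((i : ℤ) + 1)) ?_ ?_ ?_ ?_
  · intro i hi; simp at hi ⊢; omega
  · intro i _ j _ h; simpa using h
  · intro b hb
    simp at hb
    exact ⟨(b - 1).toNat, by simp; omega, by omega⟩
  · intro i _; push_cast; rfl

lemma dedekindSum_add (p q : ℤ) : dedekindSum (p + q) q = dedekindSum p q := by
  rcases le_or_gt q 0 with hq | hq
  · simp [dedekindSum, show q - 1 < 1 by omega]
  lift q to ℕ using hq.le with k
  have hk : 0 < k := by exact_mod_cast hq
  rw [dedekindSum_eq_range, dedekindSum_eq_range]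
  refine Finset.sum_congr rfl fun i _ => ?_
  rw [sawtooth_congr (a := (p + k) * i) (b := p * i) k hk]
  rw [add_mul]; simp

lemma dedekindSum_neg (p q : ℤ) : dedekindSum (-p) q = -dedekindSum p q := by
  rcases le_or_gt q 0 with hq | hq
  · simp [dedekindSum, show q - 1 < 1 by omega]
  lift q to ℕ using hq.le with k
  have hk : 0 < k := by exact_mod_cast hq
  rw [dedekindSum_eq_range, dedekindSum_eq_range, ← Finset.sum_neg_distrib]
  refine Finset.sum_congr rfl fun i _ => ?_
  rw [neg_mul, sawtooth_neg _ k hk]; ring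

lemma dedekindSum_one (p : ℤ) : dedekindSum p 1 = 0 := by simp [dedekindSum]

/-- Multiplication by `h` permutes the residues modulo `k`. -/
lemma sum_mul_mod (h k : ℕ) (hk : 0 < k) (hc : Nat.Coprime h k) (g : ℕ → ℚ) :
    ∑ i ∈ Finset.range k, g (h * i % k) = ∑ i ∈ Finset.range k, g i := by
  have hinj : Set.InjOn (fun i => h * i % k) (Finset.range k) := by
    intro i hi j hj hij
    simp at hi hj
    have : i ≡ j [MOD k] := Nat.ModEq.cancel_left_of_coprime (c := h) hc.symm hij
    exact Nat.ModEq.eq_of_lt_of_lt this hi hj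
  have hmaps : Set.MapsTo (fun i => h * i % k) (Finset.range k) (Finset.range k) := by
    intro i _; simpa using Nat.mod_lt _ hk
  have hsurj := Finset.surjOn_of_injOn_of_card_le _ hmaps hinj le_rfl
  refine Finset.sum_bij (fun i _ => h * i % k) (fun i hi => hmaps hi)
    (fun i hi j hj hij => hinj hi hj hij) (fun b hb => ?_) (fun _ _ => rfl)
  obtain ⟨a, ha, rfl⟩ := hsurj hb
  exact ⟨a, ha, rfl⟩

lemma sum_range_q (k : ℕ) : ∑ i ∈ Finset.range k, (i : ℚ) = k * (k - 1) / 2 := by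
  induction k with
  | zero => simp
  | succ k ih => rw [Finset.sum_range_succ, ih]; push_cast; ring

lemma sum_range_sq (k : ℕ) :
    ∑ i ∈ Finset.range k, (i : ℚ) ^ 2 = k * (k - 1) * (2 * k - 1) / 6 := by
  induction k with
  | zero => simp
  | succ k ih => rw [Finset.sum_range_succ, ih]; push_cast; ring

/-- The Dedekind sum in terms of remainders. The sum of the remainders themselves is known because
`i ↦ h * i % k` is a permutation of `range k`. -/
lemma dedekindSum_eq_mod (h k : ℕ) (hk : 0 < k) (hc : Nat.Coprime h k) :
    (k : ℚ) ^ 2 * dedekindSum h k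
      = ∑ i ∈ Finset.range k, (i : ℚ) * ((h * i % k : ℕ) : ℚ) - k ^ 2 * (k - 1) / 4 := by
  have hk' : (k : ℚ) ≠ 0 := by positivity
  have hterm : ∀ i ∈ Finset.range k,
      sawtooth (((i : ℤ) : ℚ) / k) * sawtooth (((h * i : ℤ) : ℚ) / k)
        = ((i : ℚ) / k - 1 / 2) * (((h * i % k : ℕ) : ℚ) / k - 1 / 2)
          - if i = 0 then 1 / 4 else 0 := by
    intro i hi
    simp at hi
    -- the summand `i = 0` vanishes, while the formula `x - 1 / 2` would give `1 / 4` there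
    by_cases h0 : i = 0
    · subst h0; simp [sawtooth]; norm_num
    have hnd : ¬ k ∣ i := fun hd => absurd (Nat.le_of_dvd (by omega) hd) (by omega)
    have h1 : ¬ (k : ℤ) ∣ (i : ℤ) := by exact_mod_cast hnd
    have h2 : ¬ (k : ℤ) ∣ ((h : ℤ) * i) := by
      intro hd
      have : k ∣ h * i := by exact_mod_cast hd
      exact hnd (hc.symm.dvd_of_dvd_mul_left this)
    rw [sawtooth_of_not_dvd _ k hk h1, sawtooth_of_not_dvd _ k hk h2, if_neg h0]
    have e1 : ((i : ℤ) % (k : ℤ)) = (i : ℤ) := by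
      exact_mod_cast Nat.mod_eq_of_lt hi
    have e2 : ((h : ℤ) * i % (k : ℤ)) = ((h * i % k : ℕ) : ℤ) := by push_cast; rfl
    rw [e1, e2, Int.cast_natCast, Int.cast_natCast, sub_zero]
  rw [dedekindSum_eq_range, Finset.sum_congr rfl hterm, Finset.sum_sub_distrib]
  have hs1 := sum_range_q k
  have hs2 := sum_mul_mod h k hk hc (fun i => (i : ℚ))
  rw [hs1] at hs2
  have hexp : ∀ i ∈ Finset.range k, ((i : ℚ) / k - 1 / 2) * (((h * i % k : ℕ) : ℚ) / k - 1 / 2)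
      = (1 / (k : ℚ) ^ 2) * ((i : ℚ) * ((h * i % k : ℕ) : ℚ)) - (1 / (2 * k)) * (i : ℚ)
        - (1 / (2 * k)) * ((h * i % k : ℕ) : ℚ) + 1 / 4 := by
    intro i _; field_simp; ring
  rw [Finset.sum_congr rfl hexp, Finset.sum_add_distrib, Finset.sum_sub_distrib,
    Finset.sum_sub_distrib, ← Finset.mul_sum, ← Finset.mul_sum, ← Finset.mul_sum, hs1, hs2]
  simp [hk]
  field_simp
  ring

/-- Both sides are `∑ 2 * j` over the lattice points `(i, j)` of `[0, k) × [0, h)` with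
`k * j ≤ h * i`, summed by columns on the left and by rows on the right. The rows use that no
lattice point with `0 < j < h` lies on the diagonal `k * j = h * i`. -/
lemma sum_floor_double (h k : ℕ) (hh : 0 < h) (hk : 0 < k) (hc : Nat.Coprime h k) :
    ∑ i ∈ Finset.range k, (((h * i / k : ℕ) : ℚ) * (((h * i / k : ℕ) : ℚ) + 1))
      = ∑ j ∈ Finset.range h, 2 * (j : ℚ) * ((k : ℚ) - 1 - ((k * j / h : ℕ) : ℚ)) := by
  have hL : ∀ i ∈ Finset.range k, (((h * i / k : ℕ) : ℚ) * (((h * i / k : ℕ) : ℚ) + 1))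
      = ∑ j ∈ Finset.range h, if k * j ≤ h * i then 2 * (j : ℚ) else 0 := by
    intro i hi
    simp at hi
    rw [← Finset.sum_filter]
    have : (Finset.range h).filter (fun j => k * j ≤ h * i) = Finset.range (h * i / k + 1) := by
      ext j
      simp only [Finset.mem_filter, Finset.mem_range, Nat.lt_succ_iff, Nat.le_div_iff_mul_le hk]
      rw [mul_comm j k]
      refine ⟨fun h => h.2, fun h' => ⟨?_, h'⟩⟩
      have : k * j < k * h := lt_of_le_of_lt h' (by nlinarith)
      exact lt_of_mul_lt_mul_left this (Nat.zero_le _)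
    rw [this, ← Finset.mul_sum, sum_range_q]
    push_cast; ring
  have hR : ∀ j ∈ Finset.range h, 2 * (j : ℚ) * ((k : ℚ) - 1 - ((k * j / h : ℕ) : ℚ))
      = ∑ i ∈ Finset.range k, if k * j ≤ h * i then 2 * (j : ℚ) else 0 := by
    intro j hj
    simp at hj
    by_cases h0 : j = 0
    · subst h0; simp
    have hnd : ¬ h ∣ j := fun hd => absurd (Nat.le_of_dvd (by omega) hd) (by omega)
    have hflt : k * j / h < k := by
      rw [Nat.div_lt_iff_lt_mul hh]; nlinarith
    have : (Finset.range k).filter (fun i => k * j ≤ h * i)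
        = (Finset.range k) \ Finset.range (k * j / h + 1) := by
      ext i
      simp only [Finset.mem_filter, Finset.mem_range, Finset.mem_sdiff, Nat.lt_succ_iff,
        Nat.le_div_iff_mul_le hh, not_le]
      refine and_congr_right fun _ => ⟨fun h' => ?_, fun h' => by nlinarith⟩
      refine lt_of_le_of_ne (by nlinarith) fun he => hnd ?_
      exact hc.dvd_of_dvd_mul_left ⟨i, by rw [he]; ring⟩
    rw [← Finset.sum_filter, this, Finset.sum_const, Finset.card_sdiff_of_subset
      (by intro x; simp; omega), Finset.card_range, Finset.card_range, nsmul_eq_mul,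
      Nat.cast_sub (by omega)]
    push_cast; ring
  rw [Finset.sum_congr rfl hL, Finset.sum_congr rfl hR, Finset.sum_comm]

/-- Reciprocity law for Dedekind sums. -/
theorem dedekind_reciprocity (h k : ℕ) (hh : 0 < h) (hk : 0 < k) (hc : Nat.Coprime h k) :
    12 * (dedekindSum h k + dedekindSum k h)
      = -3 + ((h : ℚ) ^ 2 + (k : ℚ) ^ 2 + 1) / (h * k) := by
  have hh' : (h : ℚ) ≠ 0 := by positivity
  have hk' : (k : ℚ) ≠ 0 := by positivity
  -- `h * i % k = h * i - k * (h * i / k)`, summed against `i`, summed, and squared and summed;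
  -- the left-hand sides of the last two are known since `i ↦ h * i % k` is a permutation
  have key : ∀ h k : ℕ, 0 < k → Nat.Coprime h k →
      (∑ i ∈ Finset.range k, (i : ℚ) * ((h * i % k : ℕ) : ℚ)
        = h * (k * (k - 1) * (2 * k - 1) / 6)
          - k * ∑ i ∈ Finset.range k, (i : ℚ) * ((h * i / k : ℕ) : ℚ)) ∧
      (k * (k - 1) / 2 = (h : ℚ) * (k * (k - 1) / 2)
        - k * ∑ i ∈ Finset.range k, ((h * i / k : ℕ) : ℚ)) ∧
      (k * (k - 1) * (2 * k - 1) / 6 = (h : ℚ) ^ 2 * (k * (k - 1) * (2 * k - 1) / 6)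
        - 2 * h * k * ∑ i ∈ Finset.range k, (i : ℚ) * ((h * i / k : ℕ) : ℚ)
        + k ^ 2 * ∑ i ∈ Finset.range k, ((h * i / k : ℕ) : ℚ) ^ 2) := by
    intro h k hk hc
    have hr : ∀ i : ℕ, ((h * i % k : ℕ) : ℚ) = h * i - k * ((h * i / k : ℕ) : ℚ) := by
      intro i
      have : (k : ℚ) * ((h * i / k : ℕ) : ℚ) + ((h * i % k : ℕ) : ℚ) = h * i := by
        exact_mod_cast Nat.div_add_mod (h * i) k
      linarith
    refine ⟨?_, ?_, ?_⟩
    · rw [← sum_range_sq, Finset.mul_sum, Finset.mul_sum, ← Finset.sum_sub_distrib]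
      refine Finset.sum_congr rfl fun i _ => ?_
      rw [hr]; ring
    · have := sum_mul_mod h k hk hc (fun i => (i : ℚ))
      rw [← sum_range_q]
      nth_rewrite 1 [← this]
      rw [Finset.mul_sum, Finset.mul_sum, ← Finset.sum_sub_distrib]
      exact Finset.sum_congr rfl fun i _ => hr i
    · have := sum_mul_mod h k hk hc (fun i => (i : ℚ) ^ 2)
      rw [← sum_range_sq]
      nth_rewrite 1 [← this]
      rw [Finset.mul_sum, Finset.mul_sum, Finset.mul_sum, ← Finset.sum_sub_distrib,
        ← Finset.sum_add_distrib]
      refine Finset.sum_congr rfl fun i _ => ?_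
      simp only [hr]; ring
  obtain ⟨a1, a2, a3⟩ := key h k hk hc
  obtain ⟨b1, -, -⟩ := key k h hh hc.symm
  have hD := sum_floor_double h k hh hk hc
  have d1 := dedekindSum_eq_mod h k hk hc
  have d2 := dedekindSum_eq_mod k h hh hc.symm
  rw [a1] at d1
  rw [b1] at d2
  have e1 : ∑ i ∈ Finset.range k, (((h * i / k : ℕ) : ℚ) * (((h * i / k : ℕ) : ℚ) + 1))
      = ∑ i ∈ Finset.range k, ((h * i / k : ℕ) : ℚ) ^ 2
        + ∑ i ∈ Finset.range k, ((h * i / k : ℕ) : ℚ) := by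
    rw [← Finset.sum_add_distrib]
    exact Finset.sum_congr rfl fun i _ => by ring
  have e2 : ∑ j ∈ Finset.range h, 2 * (j : ℚ) * ((k : ℚ) - 1 - ((k * j / h : ℕ) : ℚ))
      = (k - 1) * (h * (h - 1))
        - 2 * ∑ j ∈ Finset.range h, (j : ℚ) * ((k * j / h : ℕ) : ℚ) := by
    have : (k - 1) * ((h : ℚ) * (h - 1)) = 2 * (k - 1) * (h * (h - 1) / 2) := by ring
    rw [this, ← sum_range_q, Finset.mul_sum, Finset.mul_sum, ← Finset.sum_sub_distrib]
    exact Finset.sum_congr rfl fun i _ => by ring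
  rw [e1, e2] at hD
  generalize ∑ i ∈ Finset.range k, (i : ℚ) * ((h * i / k : ℕ) : ℚ) = A at *
  generalize ∑ i ∈ Finset.range h, (i : ℚ) * ((k * i / h : ℕ) : ℚ) = A' at *
  generalize ∑ i ∈ Finset.range k, ((h * i / k : ℕ) : ℚ) ^ 2 = B2 at *
  generalize ∑ i ∈ Finset.range k, ((h * i / k : ℕ) : ℚ) = B at *
  generalize dedekindSum h k = D1 at *
  generalize dedekindSum k h = D2 at *
  have hB : B = (h - 1) * (k - 1) / 2 := by
    field_simp at a2 ⊢; linarith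
  have hB2 : B2 = (k - 1) * (h * (h - 1)) - 2 * A' - (h - 1) * (k - 1) / 2 := by
    rw [← hB]; linarith
  have hD1 : D1 = (h * (k * (k - 1) * (2 * k - 1) / 6) - k * A - k ^ 2 * (k - 1) / 4) / k ^ 2 := by
    rw [← d1]; field_simp
  have hD2 : D2 = (k * (h * (h - 1) * (2 * h - 1) / 6) - h * A' - h ^ 2 * (h - 1) / 4) / h ^ 2 := by
    rw [← d2]; field_simp
  have hA : A = (((h : ℚ) ^ 2 - 1) * (k * (k - 1) * (2 * k - 1) / 6) + k ^ 2 * B2)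
      / (2 * h * k) := by
    rw [eq_div_iff (by positivity)]; linarith
  rw [hD1, hD2, hA, hB2]
  field_simp
  ring

/-! ### The Rademacher function -/

open Matrix ModularGroup in
/-- The Rademacher function of `M = (a, b; c, d)`: it is `b / d` when `c = 0` (written `b * d`, as
then `d = ±1`), and `(a + d) / c - 12 * sign c * s(a, |c|)` otherwise. The classical definition has
`s(d, |c|)`, which is the same number because `a * d ≡ 1` modulo `c`; with `a` the behaviour under
left multiplication by the generators `S` and `T` is read off directly. -/
def rademacher (M : SpecialLinearGroup (Fin 2) ℤ) : ℚ :=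
  if M 1 0 = 0 then (M 0 1 : ℚ) * M 1 1
  else ((M 0 0 : ℚ) + M 1 1) / M 1 0
    - 12 * ((M 1 0).sign : ℚ) * dedekindSum (M 0 0) |M 1 0|

lemma mul_entry (A B : Matrix.SpecialLinearGroup (Fin 2) ℤ) (i j : Fin 2) :
    (A * B) i j = A i 0 * B 0 j + A i 1 * B 1 j := by
  rw [Matrix.SpecialLinearGroup.coe_mul, Matrix.mul_apply, Fin.sum_univ_two]

lemma det_eq (M : Matrix.SpecialLinearGroup (Fin 2) ℤ) :
    M 0 0 * M 1 1 - M 0 1 * M 1 0 = 1 := by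
  have := M.det_coe
  rwa [Matrix.det_fin_two] at this

/-- Reciprocity for nonzero integers of arbitrary sign. -/
lemma signed_reciprocity (a c : ℤ) (ha : a ≠ 0) (hc : c ≠ 0) (h : IsCoprime a c) :
    12 * ((c.sign : ℚ) * dedekindSum a |c| + (a.sign : ℚ) * dedekindSum c |a|)
      = -3 * ((a * c).sign : ℚ) + ((a : ℚ) ^ 2 + (c : ℚ) ^ 2 + 1) / (a * c) := by
  have hcop : Nat.Coprime a.natAbs c.natAbs := Int.isCoprime_iff_gcd_eq_one.mp h
  have hrec := dedekind_reciprocity a.natAbs c.natAbs (Int.natAbs_pos.mpr ha)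
    (Int.natAbs_pos.mpr hc) hcop
  simp only [Nat.cast_natAbs, Int.cast_id] at hrec
  have hneg := dedekindSum_neg
  rcases lt_or_gt_of_ne ha with ha1 | ha1 <;> rcases lt_or_gt_of_ne hc with hc1 | hc1
  · rw [abs_of_neg ha1, abs_of_neg hc1] at *
    rw [Int.sign_eq_neg_one_of_neg ha1, Int.sign_eq_neg_one_of_neg hc1,
      Int.sign_eq_one_of_pos (mul_pos_of_neg_of_neg ha1 hc1)]
    rw [hneg, hneg] at hrec
    push_cast at hrec ⊢
    rw [neg_mul_neg] at hrec
    linear_combination hrec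
  · rw [abs_of_neg ha1, abs_of_pos hc1] at *
    rw [Int.sign_eq_neg_one_of_neg ha1, Int.sign_eq_one_of_pos hc1,
      Int.sign_eq_neg_one_of_neg (mul_neg_of_neg_of_pos ha1 hc1)]
    rw [hneg] at hrec
    push_cast at hrec ⊢
    rw [neg_mul, div_neg] at hrec
    linear_combination -hrec
  · rw [abs_of_pos ha1, abs_of_neg hc1] at *
    rw [Int.sign_eq_one_of_pos ha1, Int.sign_eq_neg_one_of_neg hc1,
      Int.sign_eq_neg_one_of_neg (mul_neg_of_pos_of_neg ha1 hc1)]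
    rw [hneg] at hrec
    push_cast at hrec ⊢
    rw [mul_neg, div_neg] at hrec
    linear_combination -hrec
  · rw [abs_of_pos ha1, abs_of_pos hc1] at *
    rw [Int.sign_eq_one_of_pos ha1, Int.sign_eq_one_of_pos hc1,
      Int.sign_eq_one_of_pos (mul_pos ha1 hc1)]
    push_cast at hrec ⊢
    linear_combination hrec

open Matrix ModularGroup in
lemma rademacher_S_mul (M : SpecialLinearGroup (Fin 2) ℤ) :
    rademacher (S * M) = rademacher M - 3 * ((M 1 0 * M 0 0).sign : ℚ) := by
  have hd := det_eq M
  have e00 : (S * M) 0 0 = - M 1 0 := by rw [mul_entry]; simp [coe_S]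
  have e01 : (S * M) 0 1 = - M 1 1 := by rw [mul_entry]; simp [coe_S]
  have e10 : (S * M) 1 0 = M 0 0 := by rw [mul_entry]; simp [coe_S]
  have e11 : (S * M) 1 1 = M 0 1 := by rw [mul_entry]; simp [coe_S]
  unfold rademacher
  rw [e00, e01, e10, e11]
  generalize M 0 0 = a at *
  generalize M 0 1 = b at *
  generalize M 1 0 = c at *
  generalize M 1 1 = d at *
  have hdq : (a : ℚ) * d - b * c = 1 := by exact_mod_cast hd
  have hone : ∀ x y : ℤ, x * y = 1 → |x| = 1 := fun x y h => by
    rcases Int.eq_one_or_neg_one_of_mul_eq_one h with rfl | rfl <;> rfl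
  by_cases hc : c = 0
  · subst hc
    have ha : a ≠ 0 := by rintro rfl; simp at hd
    have ha' : (a : ℚ) ≠ 0 := by exact_mod_cast ha
    rw [if_neg ha, if_pos rfl, hone a d (by linarith), dedekindSum_one]
    simp at hdq ⊢
    field_simp
    linear_combination (-b : ℚ) * hdq
  · have hc' : (c : ℚ) ≠ 0 := by exact_mod_cast hc
    rw [if_neg hc]
    by_cases ha : a = 0
    · subst ha
      rw [if_pos rfl, hone c (-b) (by linarith), dedekindSum_one]
      simp at hdq ⊢
      field_simp
      linear_combination (d : ℚ) * hdq
    · have ha' : (a : ℚ) ≠ 0 := by exact_mod_cast ha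
      rw [if_neg ha, dedekindSum_neg]
      have hr := signed_reciprocity a c ha hc ⟨d, -b, by linarith⟩
      rw [mul_comm c a]
      have : ((b : ℚ) + (-c : ℤ)) / a - (a + d) / c
          = - (((a : ℚ) ^ 2 + (c : ℚ) ^ 2 + 1) / (a * c)) := by
        push_cast; field_simp; linear_combination -hdq
      push_cast at this ⊢
      linear_combination hr + this

open Matrix ModularGroup in
lemma rademacher_T_mul (M : SpecialLinearGroup (Fin 2) ℤ) :
    rademacher (T * M) = rademacher M + 1 := by
  have hd := det_eq M
  have e00 : (T * M) 0 0 = M 0 0 + M 1 0 := by rw [mul_entry]; simp [coe_T]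
  have e01 : (T * M) 0 1 = M 0 1 + M 1 1 := by rw [mul_entry]; simp [coe_T]
  have e10 : (T * M) 1 0 = M 1 0 := by rw [mul_entry]; simp [coe_T]
  have e11 : (T * M) 1 1 = M 1 1 := by rw [mul_entry]; simp [coe_T]
  unfold rademacher
  rw [e00, e01, e10, e11]
  generalize M 0 0 = a at *
  generalize M 0 1 = b at *
  generalize M 1 0 = c at *
  generalize M 1 1 = d at *
  by_cases hc : c = 0
  · subst hc
    rw [if_pos rfl, if_pos rfl]
    have hd2 : d * d = 1 := by
      rcases Int.eq_one_or_neg_one_of_mul_eq_one (show d * a = 1 by linarith) with h | h <;>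
        simp [h]
    have : (d : ℚ) * d = 1 := by exact_mod_cast hd2
    push_cast; linear_combination this
  · have hc' : (c : ℚ) ≠ 0 := by exact_mod_cast hc
    have hds : dedekindSum (a + c) |c| = dedekindSum a |c| := by
      rcases lt_or_gt_of_ne hc with h | h
      · rw [abs_of_neg h, ← dedekindSum_add (a + c)]; congr 1; ring
      · rw [abs_of_pos h, dedekindSum_add]
    rw [if_neg hc, if_neg hc, hds]
    push_cast; field_simp; ring

/-! ### The sign cocycle -/

set_option synthInstance.maxHeartbeats 200000 in
set_option synthInstance.maxSize 1000 in
set_option maxRecDepth 100000 in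
/-- The sign pattern behind `sign_cocycle`, with `a, b, c, d, e, f` the signs of
`xy, xz, xt, yz, yt, zt` for four plane vectors `x, y, z, t` (`xy` standing for `det (x, y)`). The
first hypothesis is all that the Plücker relation `xy * zt - xz * yt + xt * yz = 0` says about
signs: its terms vanish together or include both a positive and a negative one. The other four say
that two vectors parallel to the same nonzero vector are parallel. -/
lemma signType_cocycle : ∀ a b c d e f : SignType,
    ((a * f = 0 ∧ b * e = 0 ∧ c * d = 0) ∨
      ((a * f = 1 ∨ b * e = -1 ∨ c * d = 1) ∧ (a * f = -1 ∨ b * e = 1 ∨ c * d = -1))) →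
    (a = 0 ∧ b = 0 ∧ c = 0 → d = 0 ∧ e = 0 ∧ f = 0) →
    (a = 0 ∧ d = 0 ∧ e = 0 → b = 0 ∧ c = 0 ∧ f = 0) →
    (b = 0 ∧ d = 0 ∧ f = 0 → a = 0 ∧ c = 0 ∧ e = 0) →
    (c = 0 ∧ e = 0 ∧ f = 0 → a = 0 ∧ b = 0 ∧ d = 0) →
    ((a * d * b : SignType) : ℤ) + (b * f * c : SignType)
      = (a * e * c : SignType) + (d * f * e : SignType) := by
  decide

lemma detZ_eq_zero_of_parallel {x y z : ℤ × ℤ} (hx : x ≠ 0) (hy : detZ x y = 0)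
    (hz : detZ x z = 0) : detZ y z = 0 := by
  unfold detZ at *
  have h1 : x.1 * (y.1 * z.2 - y.2 * z.1) = 0 := by linear_combination y.1 * hz - z.1 * hy
  have h2 : x.2 * (y.1 * z.2 - y.2 * z.1) = 0 := by linear_combination y.2 * hz - z.2 * hy
  by_contra h
  exact hx (Prod.ext ((mul_eq_zero.mp h1).resolve_right h) ((mul_eq_zero.mp h2).resolve_right h))

lemma detZ_eq_zero_comm {x y : ℤ × ℤ} : detZ x y = 0 ↔ detZ y x = 0 := by
  unfold detZ; constructor <;> intro h <;> linarith

/-- `(x, y, z) ↦ sign (det (x, y) * det (y, z) * det (x, z))` is a 2-cocycle on nonzero vectors. -/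
lemma sign_cocycle {x y z t : ℤ × ℤ} (hx : x ≠ 0) (hy : y ≠ 0) (hz : z ≠ 0) (ht : t ≠ 0) :
    (detZ x y * detZ y z * detZ x z).sign + (detZ x z * detZ z t * detZ x t).sign
      = (detZ x y * detZ y t * detZ x t).sign + (detZ y z * detZ z t * detZ y t).sign := by
  have hpl : detZ x y * detZ z t - detZ x z * detZ y t + detZ x t * detZ y z = 0 := by
    unfold detZ; ring
  have px := @detZ_eq_zero_of_parallel x
  have py := @detZ_eq_zero_of_parallel y
  have pz := @detZ_eq_zero_of_parallel z
  have pt := @detZ_eq_zero_of_parallel t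
  simp only [Int.sign_eq_sign, sign_mul]
  refine signType_cocycle _ _ _ _ _ _ ?_ ?_ ?_ ?_ ?_
  · simp only [← sign_mul, sign_eq_zero_iff, sign_eq_one_iff, sign_eq_neg_one_iff]
    generalize detZ x y * detZ z t = u at *
    generalize detZ x z * detZ y t = v at *
    generalize detZ x t * detZ y z = w at *
    omega
  all_goals
    simp only [sign_eq_zero_iff]
    rintro ⟨h1, h2, h3⟩
  · exact ⟨px hx h1 h2, px hx h1 h3, px hx h2 h3⟩
  · rw [detZ_eq_zero_comm] at h1
    exact ⟨py hy h1 h2, py hy h1 h3, py hy h2 h3⟩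
  · rw [detZ_eq_zero_comm] at h1 h2
    exact ⟨pz hz h1 h2, pz hz h1 h3, pz hz h2 h3⟩
  · rw [detZ_eq_zero_comm] at h1 h2 h3
    exact ⟨pt ht h1 h2, pt ht h1 h3, pt ht h2 h3⟩

open Matrix ModularGroup in
/-- The Rademacher function is a homomorphism up to a sign cocycle. The formula holds for
`M = S` and `M = T`, and propagates to products because the correction term is a 2-cocycle: the
lower-left entries of `x, y, N` and of their products are the determinants of pairs of the vectors
`x⁻¹ e₁, e₁, y e₁, y N e₁`. -/
theorem rademacher_mul (M N : SpecialLinearGroup (Fin 2) ℤ) :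
    rademacher (M * N) = rademacher M + rademacher N
      - 3 * ((M 1 0 * N 1 0 * (M * N) 1 0).sign : ℚ) := by
  have h1 : rademacher 1 = 0 := by simp [rademacher]
  have hM : M ∈ Subgroup.closure {S, T} := by simp [SpecialLinearGroup.SL2Z_generators]
  induction hM using Subgroup.closure_induction generalizing N with
  | mem x hx =>
    rcases hx with rfl | rfl
    · have hS : rademacher S = 0 := by simp [rademacher, coe_S, dedekindSum_one]
      have e : (S : SpecialLinearGroup (Fin 2) ℤ) 1 0 = 1 := by simp [coe_S]
      have e' : (S * N) 1 0 = N 0 0 := by rw [mul_entry]; simp [coe_S]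
      rw [rademacher_S_mul, hS, e, e', one_mul, zero_add]
    · have hT : rademacher T = 1 := by simp [rademacher, coe_T]
      have e : (T : SpecialLinearGroup (Fin 2) ℤ) 1 0 = 0 := by simp [coe_T]
      rw [rademacher_T_mul, hT, e]; simp; ring
  | one => simp [h1]
  | mul x y _ _ hx hy =>
    have dx := det_eq x
    have dy := det_eq y
    have dyN := det_eq (y * N)
    have hc := @sign_cocycle (x 1 1, -x 1 0) (1, 0) (y 0 0, y 1 0) ((y * N) 0 0, (y * N) 1 0)
      (by intro h; simp at h; rw [h.1, h.2] at dx; simp at dx) (by simp)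
      (by intro h; simp at h; rw [h.1, h.2] at dy; simp at dy)
      (by intro h; simp only [Prod.mk_eq_zero] at h; rw [h.1, h.2] at dyN; simp at dyN)
    have e1 : detZ (x 1 1, -x 1 0) (1, 0) = x 1 0 := by simp [detZ]
    have e2 : detZ (1, 0) (y 0 0, y 1 0) = y 1 0 := by simp [detZ]
    have e3 : detZ (x 1 1, -x 1 0) (y 0 0, y 1 0) = (x * y) 1 0 := by
      rw [mul_entry]; simp [detZ]; ring
    have e4 : detZ (y 0 0, y 1 0) ((y * N) 0 0, (y * N) 1 0) = N 1 0 := by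
      rw [mul_entry, mul_entry]; simp only [detZ]; linear_combination (N 1 0) * dy
    have e5 : detZ (x 1 1, -x 1 0) ((y * N) 0 0, (y * N) 1 0) = (x * y * N) 1 0 := by
      rw [mul_assoc, mul_entry x]; simp only [detZ]; ring
    have e6 : detZ (1, 0) ((y * N) 0 0, (y * N) 1 0) = (y * N) 1 0 := by simp [detZ]
    rw [e1, e2, e3, e4, e5, e6] at hc
    have hcq := congrArg (Int.cast : ℤ → ℚ) hc
    simp only [Int.cast_add] at hcq
    have k1 := hx (y * N)
    rw [← mul_assoc] at k1
    rw [k1, hy N, hx y]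
    linear_combination 3 * hcq
  | inv x _ hx =>
    have k1 := hx (x⁻¹ * N)
    have k2 := hx x⁻¹
    rw [mul_inv_cancel_left] at k1
    rw [mul_inv_cancel, h1] at k2
    have e : x⁻¹ 1 0 = - x 1 0 := by
      rw [SpecialLinearGroup.SL2_inv_expl]; simp
    have e1 : (1 : SpecialLinearGroup (Fin 2) ℤ) 1 0 = 0 := by simp
    rw [e1] at k2
    have es : x⁻¹ 1 0 * N 1 0 * (x⁻¹ * N) 1 0 = -(x 1 0 * (x⁻¹ * N) 1 0 * N 1 0) := by
      rw [e]; ring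
    rw [es, Int.sign_neg]
    simp only [mul_zero, Int.sign_zero, Int.cast_zero] at k2
    rw [Int.cast_neg]
    linear_combination -k1 + k2

/-! ### How the polygon winds around the origin -/

/-- A face of a set with `0` in its interior lies strictly on the negative side. -/
lemma dotV_neg_of_isMin {Q : Set V} (h0 : (0 : V) ∈ interior Q) {η y : V} (hη : η ≠ 0)
    (hy : ∀ z ∈ Q, dotV η y ≤ dotV η z) : dotV η y < 0 := by
  have hcont : Filter.Tendsto (fun t : ℝ => (-t) • η) (nhdsWithin 0 (Set.Ioi 0)) (nhds 0) := by
    have : Continuous fun t : ℝ => (-t) • η := by fun_prop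
    have h := this.tendsto 0
    simp only [neg_zero, zero_smul] at h
    exact h.mono_left nhdsWithin_le_nhds
  obtain ⟨t, htQ, ht⟩ := ((hcont.eventually (mem_interior_iff_mem_nhds.mp h0)).and
    self_mem_nhdsWithin).exists
  refine (hy _ htQ).trans_lt ?_
  have hne : 0 < η.1 ^ 2 + η.2 ^ 2 := by
    by_contra hcon
    have h1 : η.1 = 0 := by nlinarith [sq_nonneg η.1, sq_nonneg η.2]
    have h2 : η.2 = 0 := by nlinarith [sq_nonneg η.1, sq_nonneg η.2]
    exact hη (Prod.ext h1 h2)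
  have : dotV η (-t • η) = -(t * (η.1 ^ 2 + η.2 ^ 2)) := by
    simp only [dotV, Prod.smul_fst, Prod.smul_snd, smul_eq_mul]; ring
  rw [this]
  have := mul_pos (show 0 < t from ht) hne
  linarith

lemma realVec_injective : Function.Injective realVec := by
  intro a b h
  simp only [realVec, Prod.mk.injEq, Int.cast_inj] at h
  exact Prod.ext h.1 h.2

/-- Comparison of the points where the ray through `e` leaves the triangles `0, a, b` and
`0, c, d`. Writing `x y` for `det (x, y)`, one has `(x y) • e = (e y) • x + (x e) • y`, so the ray
meets the line `x y` at `e` times `(x y) / (e y + x e)`. If `[a, b]` is an edge and `c, d` lie in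
`Q`, then `[c, d]` is not beyond `[a, b]`, and equality forces `c, d` onto the edge. -/
lemma cone_compare {Q : Set V} (h0 : (0 : V) ∈ interior Q) {a b c d e : ℤ × ℤ}
    (hF : IsEdge Q (segment ℝ (realVec a) (realVec b)))
    (hc : realVec c ∈ Q) (hd : realVec d ∈ Q)
    (hab : 0 < detZ a b) (hcd : 0 < detZ c d)
    (hce : 0 < detZ c e) (hed : 0 < detZ e d) :
    (detZ e b + detZ a e) * detZ c d ≤ (detZ e d + detZ c e) * detZ a b ∧
      ((detZ e b + detZ a e) * detZ c d = (detZ e d + detZ c e) * detZ a b →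
        realVec c ∈ segment ℝ (realVec a) (realVec b) ∧
        realVec d ∈ segment ℝ (realVec a) (realVec b)) := by
  obtain ⟨⟨η, hη, hseg⟩, -⟩ := hF
  have ha := left_mem_segment ℝ (realVec a) (realVec b)
  have hb := right_mem_segment ℝ (realVec a) (realVec b)
  rw [hseg] at ha hb
  have hm := dotV_neg_of_isMin h0 hη ha.2
  have hba : dotV η (realVec b) = dotV η (realVec a) :=
    le_antisymm (hb.2 _ ha.1) (ha.2 _ hb.1)
  have hlc := ha.2 _ hc
  have hld := ha.2 _ hd
  have expand : ∀ x y : ℤ × ℤ, (detZ x y : ℝ) * dotV η (realVec e)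
      = detZ e y * dotV η (realVec x) + detZ x e * dotV η (realVec y) := by
    intro x y
    simp only [detZ, dotV, realVec]; push_cast; ring
  have E1 := expand a b
  have E2 := expand c d
  rw [hba] at E1
  have hab' : (0 : ℝ) < detZ a b := by exact_mod_cast hab
  have hcd' : (0 : ℝ) < detZ c d := by exact_mod_cast hcd
  have hce' : (0 : ℝ) < detZ c e := by exact_mod_cast hce
  have hed' : (0 : ℝ) < detZ e d := by exact_mod_cast hed
  set m := dotV η (realVec a) with hmdef
  set gc := dotV η (realVec c) with hgc
  set gd := dotV η (realVec d) with hgd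
  -- the excess of the second cone's endpoints over the face value
  have key : (detZ a b : ℝ) * (detZ e d * (gc - m) + detZ c e * (gd - m))
      = (-m) * ((detZ e d + detZ c e) * detZ a b - (detZ e b + detZ a e) * detZ c d) := by
    linear_combination (detZ c d : ℝ) * E1 - (detZ a b : ℝ) * E2
  have hx : 0 ≤ (detZ e d : ℝ) * (gc - m) := mul_nonneg hed'.le (by linarith)
  have hy : 0 ≤ (detZ c e : ℝ) * (gd - m) := mul_nonneg hce'.le (by linarith)
  refine ⟨?_, fun heq => ?_⟩
  · have h1 : 0 ≤ (-m) * ((detZ e d + detZ c e) * detZ a b - (detZ e b + detZ a e) * detZ c d) := by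
      rw [← key]; positivity
    have h2 := nonneg_of_mul_nonneg_right h1 (by linarith)
    have h3 : ((detZ e b + detZ a e) * detZ c d : ℝ) ≤ (detZ e d + detZ c e) * detZ a b := by
      linarith
    exact_mod_cast h3
  · have heq' : ((detZ e b + detZ a e) * detZ c d : ℝ) = (detZ e d + detZ c e) * detZ a b := by
      exact_mod_cast heq
    rw [heq', sub_self, mul_zero] at key
    have hz := (mul_eq_zero.mp key).resolve_left hab'.ne'
    have h1 : gc - m = 0 :=
      (mul_eq_zero.mp (by linarith : (detZ e d : ℝ) * (gc - m) = 0)).resolve_left hed'.ne'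
    have h2 : gd - m = 0 :=
      (mul_eq_zero.mp (by linarith : (detZ c e : ℝ) * (gd - m) = 0)).resolve_left hce'.ne'
    rw [hseg]
    exact ⟨⟨hc, fun z hz => by have := ha.2 z hz; linarith⟩,
      ⟨hd, fun z hz => by have := ha.2 z hz; linarith⟩⟩

/-- A direction `e` lies in the interior of at most one of the cones spanned by consecutive
vertices: applying `cone_compare` both ways puts the two edges on one line, and a vertex on an edge
is an endpoint of it. -/
lemma cone_unique {ν : ℕ} [NeZero ν] {Q : Set V} (h0 : (0 : V) ∈ interior Q) (n : Fin ν → ℤ × ℤ)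
    (hinj : Function.Injective n)
    (hvert : Set.extremePoints ℝ Q = Set.range (fun i => realVec (n i)))
    (hdetpos : ∀ i : Fin ν, 0 < detZ (n i) (n (i + 1)))
    (hedge : ∀ i : Fin ν, IsEdge Q (segment ℝ (realVec (n i)) (realVec (n (i + 1)))))
    (e : ℤ × ℤ) {i j : Fin ν}
    (hi : 0 < detZ (n i) e) (hi' : 0 < detZ e (n (i + 1)))
    (hj : 0 < detZ (n j) e) (hj' : 0 < detZ e (n (j + 1))) : i = j := by
  have hext : ∀ k, realVec (n k) ∈ Set.extremePoints ℝ Q := fun k => by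
    rw [hvert]; exact ⟨k, rfl⟩
  have hmem : ∀ k, realVec (n k) ∈ Q := fun k => (hext k).1
  obtain ⟨hle, heq⟩ := cone_compare h0 (hedge i) (hmem j) (hmem (j + 1)) (hdetpos i) (hdetpos j)
    hj hj'
  obtain ⟨hge, -⟩ := cone_compare h0 (hedge j) (hmem i) (hmem (i + 1)) (hdetpos j) (hdetpos i)
    hi hi'
  obtain ⟨s1, s2⟩ := heq (le_antisymm hle hge)
  have hcases : ∀ k, realVec (n k) ∈ segment ℝ (realVec (n i)) (realVec (n (i + 1))) →
      n i = n k ∨ n (i + 1) = n k := fun k hk =>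
    ((mem_extremePoints_iff_forall_segment.mp (hext k)).2 _ (hmem i) _ (hmem (i + 1)) hk).imp
      (fun h => realVec_injective h) (fun h => realVec_injective h)
  rcases hcases j s1 with h1 | h1
  · exact hinj h1
  · exfalso
    have hpj := hdetpos j
    have hpi := hdetpos i
    rcases hcases (j + 1) s2 with h2 | h2
    · rw [← h1, ← h2] at hpj
      simp only [detZ] at hpi hpj
      linarith
    · rw [← h1, ← h2] at hpj
      simp only [detZ] at hpj
      linarith

/-- Some line through the origin, of direction `(1, N)`, avoids finitely many nonzero vectors. -/
lemma exists_transversal {ι : Type*} [Fintype ι] (n : ι → ℤ × ℤ) (hn : ∀ i, n i ≠ 0) :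
    ∃ N : ℤ, ∀ i, (n i).2 - N * (n i).1 ≠ 0 := by
  refine ⟨1 + ∑ i, |(n i).2|, fun i h => ?_⟩
  have hle : |(n i).2| ≤ ∑ i, |(n i).2| :=
    Finset.single_le_sum (f := fun i => |(n i).2|) (fun _ _ => abs_nonneg _) (Finset.mem_univ i)
  set N := ∑ i, |(n i).2|
  have hN : 0 ≤ N := (abs_nonneg _).trans hle
  have h2 : (n i).2 = (1 + N) * (n i).1 := by linarith
  by_cases h1 : (n i).1 = 0
  · rw [h1, mul_zero] at h2
    exact hn i (Prod.ext h1 h2)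
  · have h3 : 1 ≤ |(n i).1| := Int.one_le_abs h1
    rw [h2, abs_mul, abs_of_pos (by linarith : 0 < 1 + N)] at hle
    nlinarith

/-- A cyclic sequence of `ν` nonzero numbers with at most one descent through zero, at most one
ascent and at least one sign change has exactly one of each, as these are balanced. -/
lemma sum_sign_eq {ν : ℕ} [NeZero ν] (d : Fin ν → ℤ) (hd : ∀ i, d i ≠ 0)
    (hdesc : ∀ i j, 0 < d i → d (i + 1) < 0 → 0 < d j → d (j + 1) < 0 → i = j)
    (hasc : ∀ i j, d i < 0 → 0 < d (i + 1) → d j < 0 → 0 < d (j + 1) → i = j)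
    (hex : ∃ i, d i * d (i + 1) < 0) :
    ∑ i, (d i * d (i + 1)).sign = (ν : ℤ) - 4 := by
  classical
  let D : Finset (Fin ν) := Finset.univ.filter fun i => 0 < d i ∧ d (i + 1) < 0
  let U : Finset (Fin ν) := Finset.univ.filter fun i => d i < 0 ∧ 0 < d (i + 1)
  have hD : D.card ≤ 1 := Finset.card_le_one.mpr fun i hi j hj => by
    simp only [D, Finset.mem_filter] at hi hj
    exact hdesc i j hi.2.1 hi.2.2 hj.2.1 hj.2.2
  have hU : U.card ≤ 1 := Finset.card_le_one.mpr fun i hi j hj => by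
    simp only [U, Finset.mem_filter] at hi hj
    exact hasc i j hi.2.1 hi.2.2 hj.2.1 hj.2.2
  have hDc : ∑ i, (if 0 < d i ∧ d (i + 1) < 0 then (1 : ℤ) else 0) = D.card := by
    simp [D]
  have hUc : ∑ i, (if d i < 0 ∧ 0 < d (i + 1) then (1 : ℤ) else 0) = U.card := by
    simp [U]
  have hlocal : ∀ i, (d i * d (i + 1)).sign
      = 1 - 2 * (if 0 < d i ∧ d (i + 1) < 0 then (1 : ℤ) else 0)
        - 2 * (if d i < 0 ∧ 0 < d (i + 1) then (1 : ℤ) else 0) ∧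
      (d i).sign - (d (i + 1)).sign
      = 2 * (if 0 < d i ∧ d (i + 1) < 0 then (1 : ℤ) else 0)
        - 2 * (if d i < 0 ∧ 0 < d (i + 1) then (1 : ℤ) else 0) := by
    intro i
    rw [Int.sign_mul]
    rcases lt_or_gt_of_ne (hd i) with h1 | h1 <;> rcases lt_or_gt_of_ne (hd (i + 1)) with h2 | h2
    all_goals
      first
      | rw [Int.sign_eq_neg_one_of_neg h1]
      | rw [Int.sign_eq_one_of_pos h1]
      first
      | rw [Int.sign_eq_neg_one_of_neg h2]
      | rw [Int.sign_eq_one_of_pos h2]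
      simp [h1, h2, h1.le, h2.le, h1.not_gt, h2.not_gt]
  have hbal : (D.card : ℤ) = U.card := by
    have h0 : ∑ i, (d (i + 1)).sign = ∑ i, (d i).sign :=
      Equiv.sum_comp (Equiv.addRight (1 : Fin ν)) fun i => (d i).sign
    have h1 : ∑ i, ((d i).sign - (d (i + 1)).sign) = 0 := by
      rw [Finset.sum_sub_distrib, h0, sub_self]
    rw [Finset.sum_congr rfl fun i _ => (hlocal i).2, Finset.sum_sub_distrib, ← Finset.mul_sum,
      ← Finset.mul_sum, hDc, hUc] at h1
    linarith
  have hpos : 0 < D.card ∨ 0 < U.card := by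
    obtain ⟨i, hi⟩ := hex
    rcases mul_neg_iff.mp hi with h | h
    · exact Or.inl (Finset.card_pos.mpr ⟨i, by simpa [D] using h⟩)
    · exact Or.inr (Finset.card_pos.mpr ⟨i, by simpa [U] using h⟩)
  rw [Finset.sum_congr rfl fun i _ => (hlocal i).1, Finset.sum_sub_distrib, Finset.sum_sub_distrib,
    ← Finset.mul_sum, ← Finset.mul_sum, hDc, hUc]
  simp
  omega

/-! ### The identity -/

/-- **Dedekind sum identity for ℓ-reflexive polygons.** The vertices of `Q` are
`n 0, …, n (ν−1)` in anticlockwise order (indices read modulo ν). -/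
theorem dedekind_sum_identity (ℓ ν : ℕ) [NeZero ν] (hℓ : 1 < ℓ) (hν : 3 ≤ ν)
    (Q : Set V) (hQ : IsLReflexive ℓ Q) (n : Fin ν → ℤ × ℤ)
    (hinj : Function.Injective n)
    (hvert : Set.extremePoints ℝ Q = Set.range (fun i => realVec (n i)))
    (hdetpos : ∀ i : Fin ν, 0 < detZ (n i) (n (i + 1)))
    (hedge : ∀ i : Fin ν, IsEdge Q (segment ℝ (realVec (n i)) (realVec (n (i + 1)))))
    (p : Fin ν → ℤ) (w : Fin ν → ℤ × ℤ)
    (hp0 : ∀ i, 0 ≤ p i) (hpq : ∀ i, p i < detZ (n i) (n (i + 1)))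
    (hbasis : ∀ i, IsZBasis (n i) (w i))
    (hdec : ∀ i, n (i + 1) = p i • n i + detZ (n i) (n (i + 1)) • w i) :
    12 * ∑ i : Fin ν, dedekindSum (p i) (detZ (n i) (n (i + 1)))
      = 12 - 3 * (ν : ℚ)
        + ∑ i : Fin ν, (detZ (n i) (n (i + 2)) : ℚ)
            / ((detZ (n i) (n (i + 1)) : ℚ) * (detZ (n (i + 1)) (n (i + 2)) : ℚ)) := by
  have h12 : ∀ i : Fin ν, i + 1 + 1 = i + 2 := by
    intro i
    rw [add_assoc]
    congr 1
    apply Fin.ext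
    simp [Fin.val_add]
  have hshift : ∀ g : Fin ν → ℚ, ∑ i, g (i + 1) = ∑ i, g i := fun g =>
    Equiv.sum_comp (Equiv.addRight 1) g
  have hq : ∀ i, (detZ (n i) (n (i + 1)) : ℚ) ≠ 0 := fun i => by
    exact_mod_cast (hdetpos i).ne'
  -- `(n i, w i)` is positively oriented because `det (n i) (n (i + 1)) = q i * det (n i) (w i)`
  have hA : ∀ i, (n i).1 * (w i).2 - (w i).1 * (n i).2 = 1 := by
    intro i
    have h1 : detZ (n i) (n (i + 1))
        = detZ (n i) (n (i + 1)) * ((n i).1 * (w i).2 - (w i).1 * (n i).2) := by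
      conv_lhs => rw [hdec i]
      simp only [detZ, Prod.fst_add, Prod.snd_add, Prod.smul_fst, Prod.smul_snd, smul_eq_mul]
      ring
    exact mul_left_cancel₀ (hdetpos i).ne' (by rw [← h1, mul_one])
  obtain ⟨N, hN⟩ := exists_transversal n (fun i h => by
    have := hdetpos i
    rw [h] at this
    simp [detZ] at this)
  -- `d i = det ((1, N), n i)` records the side of the line `ℝ (1, N)` on which `n i` lies
  set d : Fin ν → ℤ := fun i => (n i).2 - N * (n i).1 with hd
  have hsign : ∑ i, (d i * d (i + 1)).sign = (ν : ℤ) - 4 := by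
    refine sum_sign_eq d hN ?_ ?_ ?_
    · intro i j hi hi' hj hj'
      refine cone_unique hQ.zero_mem_interior n hinj hvert hdetpos hedge (-1, -N) ?_ ?_ ?_ ?_ <;>
        simp only [detZ, hd] at * <;> linarith
    · intro i j hi hi' hj hj'
      refine cone_unique hQ.zero_mem_interior n hinj hvert hdetpos hedge (1, N) ?_ ?_ ?_ ?_ <;>
        simp only [detZ, hd] at * <;> linarith
    · -- otherwise a sum of positive numbers telescopes to zero
      by_contra! hcon
      have hpos : ∀ i, (0 : ℚ) < (detZ (n i) (n (i + 1)) : ℚ) / (d i * d (i + 1)) := by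
        intro i
        have h1 : 0 < d i * d (i + 1) :=
          lt_of_le_of_ne (hcon i) (mul_ne_zero (hN i) (hN (i + 1))).symm
        have h2 := hdetpos i
        have h1' : (0 : ℚ) < d i * d (i + 1) := by exact_mod_cast h1
        have h2' : (0 : ℚ) < detZ (n i) (n (i + 1)) := by exact_mod_cast h2
        positivity
      have hsum : ∑ i, (detZ (n i) (n (i + 1)) : ℚ) / (d i * d (i + 1)) = 0 := by
        have : ∀ i, (detZ (n i) (n (i + 1)) : ℚ) / (d i * d (i + 1))
            = ((n i).1 : ℚ) / d i - ((n (i + 1)).1 : ℚ) / d (i + 1) := by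
          intro i
          have h1 : (d i : ℚ) ≠ 0 := by exact_mod_cast hN i
          have h2 : (d (i + 1) : ℚ) ≠ 0 := by exact_mod_cast hN (i + 1)
          field_simp
          simp only [hd, detZ]
          push_cast
          ring
        rw [Finset.sum_congr rfl fun i _ => this i, Finset.sum_sub_distrib,
          hshift (fun i => ((n i).1 : ℚ) / d i), sub_self]
      exact absurd hsum (Finset.sum_pos (fun i _ => hpos i) ⟨0, Finset.mem_univ _⟩).ne'
  let A : Fin ν → Matrix.SpecialLinearGroup (Fin 2) ℤ := fun i =>
    ⟨!![(n i).1, (w i).1; (n i).2, (w i).2], by rw [Matrix.det_fin_two_of]; exact hA i⟩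
  let E : Matrix.SpecialLinearGroup (Fin 2) ℤ :=
    ⟨!![1, 0; -N, 1], by rw [Matrix.det_fin_two_of]; ring⟩
  -- the shear `E` sends `(1, N)` to `(1, 0)`
  have hEA : ∀ i, (E * A i) 1 0 = d i := by
    intro i
    rw [mul_entry]
    simp [E, A, hd]
    ring
  have hdec1 : ∀ i, (n (i + 1)).1 = p i * (n i).1 + detZ (n i) (n (i + 1)) * (w i).1 := fun i => by
    conv_lhs => rw [hdec i]
    simp
  have hdec2 : ∀ i, (n (i + 1)).2 = p i * (n i).2 + detZ (n i) (n (i + 1)) * (w i).2 := fun i => by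
    conv_lhs => rw [hdec i]
    simp
  have hB : ∀ i, ((A i)⁻¹ * A (i + 1)) 0 0 = p i
      ∧ ((A i)⁻¹ * A (i + 1)) 1 0 = detZ (n i) (n (i + 1))
      ∧ ((A i)⁻¹ * A (i + 1)) 1 1 = detZ (n i) (w (i + 1)) := by
    intro i
    refine ⟨?_, ?_, ?_⟩ <;> rw [mul_entry, Matrix.SpecialLinearGroup.SL2_inv_expl] <;> simp [A]
    · rw [hdec1, hdec2]; linear_combination (p i) * hA i
    · simp only [detZ]; ring
    · simp only [detZ]; ring
  have hstep : ∀ i, rademacher (E * A (i + 1)) = rademacher (E * A i)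
      + (((p i : ℚ) + detZ (n i) (w (i + 1))) / detZ (n i) (n (i + 1))
        - 12 * dedekindSum (p i) (detZ (n i) (n (i + 1))))
      - 3 * ((d i * d (i + 1)).sign : ℚ) := by
    intro i
    obtain ⟨b1, b2, b3⟩ := hB i
    have hm := rademacher_mul (E * A i) ((A i)⁻¹ * A (i + 1))
    have hprod : E * A i * ((A i)⁻¹ * A (i + 1)) = E * A (i + 1) := by group
    have hΦ : rademacher ((A i)⁻¹ * A (i + 1))
        = ((p i : ℚ) + detZ (n i) (w (i + 1))) / detZ (n i) (n (i + 1))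
        - 12 * dedekindSum (p i) (detZ (n i) (n (i + 1))) := by
      unfold rademacher
      rw [b1, b2, b3, if_neg (hdetpos i).ne', abs_of_pos (hdetpos i),
        Int.sign_eq_one_of_pos (hdetpos i)]
      simp
    rw [hprod, hΦ, hEA, hEA, b2] at hm
    rw [hm, Int.sign_mul, Int.sign_mul, Int.sign_mul, Int.sign_eq_one_of_pos (hdetpos i), mul_one]
  have htot := Finset.sum_congr rfl fun i (_ : i ∈ Finset.univ) => hstep i
  rw [hshift (fun i => rademacher (E * A i)), Finset.sum_sub_distrib, Finset.sum_add_distrib,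
    Finset.sum_sub_distrib, ← Finset.mul_sum, ← Finset.mul_sum] at htot
  have hsignq : ∑ i, ((d i * d (i + 1)).sign : ℚ) = (ν : ℚ) - 4 := by exact_mod_cast hsign
  have hright : ∑ i : Fin ν, (detZ (n i) (n (i + 2)) : ℚ)
        / ((detZ (n i) (n (i + 1)) : ℚ) * (detZ (n (i + 1)) (n (i + 2)) : ℚ))
      = ∑ i, ((p i : ℚ) + detZ (n i) (w (i + 1))) / detZ (n i) (n (i + 1)) := by
    have hterm : ∀ i, (detZ (n i) (n (i + 2)) : ℚ)
        / ((detZ (n i) (n (i + 1)) : ℚ) * (detZ (n (i + 1)) (n (i + 2)) : ℚ))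
        = (p (i + 1) : ℚ) / detZ (n (i + 1)) (n (i + 1 + 1))
          + (detZ (n i) (w (i + 1)) : ℚ) / detZ (n i) (n (i + 1)) := by
      intro i
      rw [← h12 i]
      have hz : detZ (n i) (n (i + 1 + 1)) = p (i + 1) * detZ (n i) (n (i + 1))
          + detZ (n (i + 1)) (n (i + 1 + 1)) * detZ (n i) (w (i + 1)) := by
        conv_lhs => rw [detZ, hdec1 (i + 1), hdec2 (i + 1)]
        simp only [detZ]
        ring
      have h1 := hq i
      have h2 := hq (i + 1)
      rw [hz]
      push_cast
      field_simp
    rw [Finset.sum_congr rfl fun i _ => hterm i, Finset.sum_add_distrib,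
      hshift (fun i => (p i : ℚ) / detZ (n i) (n (i + 1))), ← Finset.sum_add_distrib]
    exact Finset.sum_congr rfl fun i _ => by rw [add_div]
  rw [hright]
  rw [hsignq] at htot
  linear_combination htot
end
end

section
/- Interior lattice-point count of an ℓ-reflexive polygon: Let ℓ be a positive integer and Q ⊆ ℝ² an ℓ-reflexive polygon with respect to ℤ². Then 2·#(interior(Q) ∩ ℤ²) = (ℓ − 1)·#(frontier Q ∩ ℤ²) + 2. -/
/-!
Every nonzero lattice point `p` lies in the cone over some edge of `Q`, and has a height `k > 0`,
the value at `p` of the primitive outer normal `η` of that edge; boundary points have height `ℓ`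
and nonzero interior points have heights `1, …, ℓ - 1`. Cut the boundary into unit segments
`[u, u⁺]` between consecutive boundary lattice points. For a boundary lattice point `u` and
`0 < k < ℓ`, the lattice points at height `k` (with respect to the edge going on
counterclockwise from `u`) form a translate of `ℤ τ`, `τ = u⁺ - u`, so exactly one of them is of
the form `p = (k u + r τ) / ℓ` with `0 ≤ r < ℓ`. If `r < k`, then `p` lies in the cone over
`[u, u⁺)`. If `r ≥ k`, then `u⁺ - p = ((ℓ - k) u + (ℓ - r) τ) / ℓ` has height
`ℓ - k` and lies in the cone over `(u, u⁺]`.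
Both families of half-open cones partition the nonzero lattice points, so each alternative
enumerates the nonzero interior lattice points exactly once, whence
`2 (#interior - 1) = (ℓ - 1) #boundary`.

`Config` collects the lattice data that this argument uses and `Config.count` carries it out. The
disjointness of the cones is `Config.unique_right` and `Config.unique_left`; covering by the second
family follows from covering by the first, as `u ↦ u⁺` is an injective self-map of a finite set.
The convex geometry is in `exists_next_vertex`, which finds the edge going on from a boundary point
by maximizing a slope over the vertices.
-/

open Set

noncomputable section

/-! ### Lattice arithmetic in ℤ² -/

/-- The integral pairing `⟨η, y⟩` on `ℤ²`. -/
def dz (η y : ℤ × ℤ) : ℤ := η.1 * y.1 + η.2 * y.2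

/-- Counterclockwise rotation by a right angle. For a primitive outer normal `η` of an edge,
`rot η` is the primitive lattice vector pointing counterclockwise along that edge. -/
def rot (η : ℤ × ℤ) : ℤ × ℤ := (-η.2, η.1)

/-- The determinant of two integral vectors. -/
def cr (x y : ℤ × ℤ) : ℤ := x.1 * y.2 - x.2 * y.1

lemma dz_rot_self (η : ℤ × ℤ) : dz η (rot η) = 0 := by
  simp only [dz, rot]; ring

lemma dz_rot_anti (η η' : ℤ × ℤ) : dz η (rot η') = -dz η' (rot η) := by
  simp only [dz, rot]; ring

lemma dz_add (η x y : ℤ × ℤ) : dz η (x + y) = dz η x + dz η y := by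
  simp only [dz, Prod.fst_add, Prod.snd_add]; ring

lemma dz_smul (η x : ℤ × ℤ) (k : ℤ) : dz η (k • x) = k * dz η x := by
  simp only [dz, Prod.smul_fst, Prod.smul_snd, smul_eq_mul]; ring

/-- Parallel normals with the same nonzero value at a point coincide. -/
lemma normal_unique {η η' p : ℤ × ℤ} {k : ℤ} (hk : 0 < k) (h : dz η p = k) (h' : dz η' p = k)
    (hX : dz η' (rot η) = 0) : η = η' := by
  simp only [dz, rot] at *
  have h1 : k * (η.1 - η'.1) = 0 := by
    linear_combination (-η.1) * h' + η'.1 * h + p.2 * hX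
  have h2 : k * (η.2 - η'.2) = 0 := by
    linear_combination (-η.2) * h' + η'.2 * h - p.1 * hX
  have e1 : η.1 - η'.1 = 0 := by
    rcases mul_eq_zero.1 h1 with h | h
    · omega
    · exact h
  have e2 : η.2 - η'.2 = 0 := by
    rcases mul_eq_zero.1 h2 with h | h
    · omega
    · exact h
  exact Prod.ext (by omega) (by omega)

/-- A primitive direction `rot η` is not divisible in `ℤ²`. -/
lemma dvd_of_smul {k r : ℤ} {η v : ℤ × ℤ} (hη : IsCoprime η.1 η.2) (h : k • v = r • rot η) :
    k ∣ r := by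
  obtain ⟨a, b, hab⟩ := hη
  have h1 := congrArg Prod.fst h
  have h2 := congrArg Prod.snd h
  simp only [rot, Prod.smul_fst, Prod.smul_snd, smul_eq_mul] at h1 h2
  exact ⟨a * v.2 - b * v.1, by linear_combination (-r) * hab + b * h1 - a * h2⟩

/-! ### The combinatorial count -/

/-- The lattice data of an `ℓ`-reflexive polygon: `S` are its lattice points, `B` those on the
boundary, and for `u ∈ B`, `N u` is the primitive outer normal of the edge containing `u` and
going on counterclockwise from `u`. Normals are outer, so edges lie on `⟨η, ·⟩ = ℓ`. -/
structure Config (ℓ : ℤ) (S B : Finset (ℤ × ℤ)) (N : ℤ × ℤ → ℤ × ℤ) : Prop where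
  pos : 0 < ℓ
  zero_mem : 0 ∈ S
  zero_notMem : 0 ∉ B
  sub : B ⊆ S
  conv : ∀ x ∈ S, ∀ y ∈ S, ∀ (z : ℤ × ℤ) (α β n : ℤ), 0 ≤ α → 0 ≤ β → α + β ≤ n → 0 < n →
    n • z = α • x + β • y → z ∈ S
  coprime : ∀ u ∈ B, IsCoprime (N u).1 (N u).2
  supp : ∀ u ∈ B, ∀ y ∈ S, dz (N u) y ≤ ℓ
  on : ∀ u ∈ B, dz (N u) u = ℓ
  bdry : ∀ u ∈ B, ∀ y ∈ S, dz (N u) y = ℓ → y ∈ B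
  next : ∀ u ∈ B, u + rot (N u) ∈ B
  cover : ∀ p : ℤ × ℤ, p ≠ 0 → ∃ u ∈ B, ∃ k r : ℤ, 0 ≤ r ∧ r < k ∧
    ℓ • p = k • u + r • rot (N u)

namespace Config

variable {ℓ : ℤ} {S B : Finset (ℤ × ℤ)} {N : ℤ × ℤ → ℤ × ℤ}

lemma height (C : Config ℓ S B N) {u p : ℤ × ℤ} {k r : ℤ} (hu : u ∈ B)
    (h : ℓ • p = k • u + r • rot (N u)) : dz (N u) p = k := by
  have h1 := congrArg (dz (N u)) h
  rw [dz_add, dz_smul, dz_smul, dz_smul, dz_rot_self, C.on u hu] at h1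
  exact mul_left_cancel₀ C.pos.ne' (show ℓ * dz (N u) p = ℓ * k by linarith)

lemma height_le (C : Config ℓ S B N) {u v p : ℤ × ℤ} {k r : ℤ} (hu : u ∈ B) (hv : v ∈ B)
    (hr : 0 ≤ r) (hrk : r ≤ k) (h : ℓ • p = k • u + r • rot (N u)) : dz (N v) p ≤ k := by
  have h1 := congrArg (dz (N v)) h
  rw [dz_add, dz_smul, dz_smul, dz_smul] at h1
  have hp := C.pos
  have a1 := C.supp v hv u (C.sub hu)
  have a2 := C.supp v hv _ (C.sub (C.next u hu))
  rw [dz_add] at a2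
  have : ℓ * dz (N v) p ≤ ℓ * k := by nlinarith
  exact le_of_mul_le_mul_left this hp

/-- Once the edges agree, a point determines the unit boundary segment whose cone contains it. -/
lemma eq_of_normal (C : Config ℓ S B N) {u v p : ℤ × ℤ} {k r s : ℤ} (hu : u ∈ B)
    (hN : N u = N v) (hk : 0 < k) (h1 : r - s < k) (h2 : s - r < k)
    (h : ℓ • p = k • u + r • rot (N u)) (h' : ℓ • p = k • v + s • rot (N v)) : u = v := by
  rw [← hN] at h'
  have e : k • (u - v) = (s - r) • rot (N u) := by
    rw [smul_sub, sub_smul, sub_eq_sub_iff_add_eq_add, ← h, add_comm, ← h']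
  have := Int.eq_zero_of_abs_lt_dvd (dvd_of_smul (C.coprime u hu) e) (by rw [abs_lt]; omega)
  rw [this, zero_smul] at e
  exact sub_eq_zero.1 ((smul_eq_zero.1 e).resolve_left hk.ne')

/-- The cones over the half-open segments `[u, u + rot (N u))` are disjoint. -/
lemma unique_right (C : Config ℓ S B N) {u v p : ℤ × ℤ} {k j r s : ℤ} (hu : u ∈ B) (hv : v ∈ B)
    (hr : 0 ≤ r) (hrk : r < k) (hs : 0 ≤ s) (hsj : s < j)
    (h : ℓ • p = k • u + r • rot (N u)) (h' : ℓ • p = j • v + s • rot (N v)) :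
    u = v ∧ k = j := by
  have hkj : k = j := le_antisymm
    (C.height hu h ▸ C.height_le hv hu hs hsj.le h')
    (C.height hv h' ▸ C.height_le hu hv hr hrk.le h)
  subst hkj
  -- if `N v` takes the value `ℓ` somewhere on `[u, u⁺)`, it does so at `u`, hence cannot increase
  -- towards `u⁺`
  have key : ∀ {u v : ℤ × ℤ} {r : ℤ}, u ∈ B → v ∈ B → 0 ≤ r → r < k →
      ℓ • p = k • u + r • rot (N u) → dz (N v) p = k → dz (N v) (rot (N u)) ≤ 0 := by
    intro u v r hu hv hr hrk h hp
    have h1 := congrArg (dz (N v)) h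
    rw [dz_add, dz_smul, dz_smul, dz_smul, hp] at h1
    have a1 := C.supp v hv u (C.sub hu)
    have a2 := C.supp v hv _ (C.sub (C.next u hu))
    rw [dz_add] at a2
    by_contra! hc
    nlinarith
  have x1 := key hu hv hr hrk h (C.height hv h')
  have x2 := key hv hu hs hsj h' (C.height hu h)
  rw [dz_rot_anti] at x2
  have hN : N u = N v :=
    normal_unique (by omega) (C.height hu h) (C.height hv h') (by omega)
  exact ⟨C.eq_of_normal hu hN (by omega) (by omega) (by omega) h h', rfl⟩

/-- The cones over the half-open segments `(u, u + rot (N u)]` are disjoint. -/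
lemma unique_left (C : Config ℓ S B N) {u v p : ℤ × ℤ} {k j r s : ℤ} (hu : u ∈ B) (hv : v ∈ B)
    (hr : 0 < r) (hrk : r ≤ k) (hs : 0 < s) (hsj : s ≤ j)
    (h : ℓ • p = k • u + r • rot (N u)) (h' : ℓ • p = j • v + s • rot (N v)) :
    u = v ∧ k = j := by
  have hkj : k = j := le_antisymm
    (C.height hu h ▸ C.height_le hv hu hs.le hsj h')
    (C.height hv h' ▸ C.height_le hu hv hr.le hrk h)
  subst hkj
  -- if `N v` takes the value `ℓ` somewhere on `(u, u⁺]`, it does so at `u⁺`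
  have key : ∀ {u v : ℤ × ℤ} {r : ℤ}, u ∈ B → v ∈ B → 0 < r → r ≤ k →
      ℓ • p = k • u + r • rot (N u) → dz (N v) p = k → 0 ≤ dz (N v) (rot (N u)) := by
    intro u v r hu hv hr hrk h hp
    have h1 := congrArg (dz (N v)) h
    rw [dz_add, dz_smul, dz_smul, dz_smul, hp] at h1
    have a1 := C.supp v hv u (C.sub hu)
    have a2 := C.supp v hv _ (C.sub (C.next u hu))
    rw [dz_add] at a2
    by_contra! hc
    nlinarith
  have x1 := key hu hv hr hrk h (C.height hv h')
  have x2 := key hv hu hs hsj h' (C.height hu h)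
  rw [dz_rot_anti] at x2
  have hN : N u = N v :=
    normal_unique (by omega) (C.height hu h) (C.height hv h') (by omega)
  exact ⟨C.eq_of_normal hu hN (by omega) (by omega) (by omega) h h', rfl⟩

/-- Every boundary lattice point is the successor of another one: the successor map is injective
on the finite set `B`. -/
lemma exists_pred (C : Config ℓ S B N) {v : ℤ × ℤ} (hv : v ∈ B) :
    ∃ u ∈ B, u + rot (N u) = v := by
  have hp := C.pos
  have inj : Set.InjOn (fun u => u + rot (N u)) (B : Set (ℤ × ℤ)) := by
    intro x hx y hy hxy
    have e : ∀ u : ℤ × ℤ, ℓ • (u + rot (N u)) = ℓ • u + ℓ • rot (N u) := fun u => smul_add _ _ _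
    simp only at hxy
    exact (C.unique_left (p := x + rot (N x)) hx hy hp le_rfl hp le_rfl (e x)
      (by rw [hxy]; exact e y)).1
  have := Finset.surjOn_of_injOn_of_card_le (s := B) (t := B) _ (fun u hu => C.next u hu) inj le_rfl
  obtain ⟨u, hu, h⟩ := this hv
  exact ⟨u, hu, h⟩

/-- The cones over the half-open segments `(u, u + rot (N u)]` cover the nonzero lattice points. -/
lemma cover_left (C : Config ℓ S B N) {p : ℤ × ℤ} (hp : p ≠ 0) :
    ∃ u ∈ B, ∃ k r : ℤ, 0 < r ∧ r ≤ k ∧ ℓ • p = k • u + r • rot (N u) := by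
  obtain ⟨u, hu, k, r, hr, hrk, h⟩ := C.cover p hp
  rcases hr.lt_or_eq with h0 | h0
  · exact ⟨u, hu, k, r, h0, hrk.le, h⟩
  · subst h0
    obtain ⟨v, hv, hvu⟩ := C.exists_pred hu
    exact ⟨v, hv, k, k, hrk, le_rfl, by rw [h, zero_smul, add_zero, ← hvu, smul_add]⟩

lemma mem_inner (C : Config ℓ S B N) {u p : ℤ × ℤ} {k r : ℤ} (hu : u ∈ B) (hr : 0 ≤ r)
    (hrk : r ≤ k) (hk : 0 < k) (hkl : k < ℓ) (h : ℓ • p = k • u + r • rot (N u)) :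
    p ∈ (S \ B).erase 0 := by
  refine Finset.mem_erase.2 ⟨?_, Finset.mem_sdiff.2 ⟨?_, fun hpB => ?_⟩⟩
  · rintro rfl
    have := C.height hu h
    simp [dz] at this
    omega
  · refine C.conv u (C.sub hu) _ (C.sub (C.next u hu)) p (k - r) r ℓ (by omega) hr (by omega)
      C.pos ?_
    rw [h, sub_smul, smul_add]; abel
  · have := C.height_le hu hpB hr hrk h
    rw [C.on p hpB] at this
    omega

lemma height_lt (C : Config ℓ S B N) {u p : ℤ × ℤ} {k r : ℤ} (hu : u ∈ B)
    (hp : p ∈ (S \ B).erase 0) (h : ℓ • p = k • u + r • rot (N u)) : k < ℓ := by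
  obtain ⟨-, hp⟩ := Finset.mem_erase.1 hp
  obtain ⟨hS, hB⟩ := Finset.mem_sdiff.1 hp
  have := C.supp u hu p hS
  have h2 := C.height hu h
  rcases this.lt_or_eq with h3 | h3
  · omega
  · exact absurd (C.bdry u hu p hS h3) hB

/-- On the line at height `k` below the edge at `u`, exactly one lattice point has
`rot (N u)`-coordinate in `[0, 1)` relative to `(k / ℓ) u`. This is existence. -/
lemma exists_residue (C : Config ℓ S B N) {u : ℤ × ℤ} (hu : u ∈ B) (k : ℤ) :
    ∃ (p : ℤ × ℤ) (r : ℤ), 0 ≤ r ∧ r < ℓ ∧ ℓ • p = k • u + r • rot (N u) := by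
  have hp := C.pos
  obtain ⟨a, b, hab⟩ := C.coprime u hu
  have hon := C.on u hu
  set w : ℤ × ℤ := (a, b) with hw
  set c := cr w u with hc
  have e := Int.emod_add_mul_ediv (-(k * c)) ℓ
  refine ⟨k • w + (-((-(k * c)) / ℓ)) • rot (N u), (-(k * c)) % ℓ,
    Int.emod_nonneg _ hp.ne', Int.emod_lt_of_pos _ hp, ?_⟩
  generalize (-(k * c)) % ℓ = r at *
  generalize (-(k * c)) / ℓ = x at *
  -- `u = ℓ w + c · rot (N u)` because `⟨N u, w⟩ = 1`
  have hr : r = -(k * c) - ℓ * x := by linarith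
  subst hr
  simp only [dz, cr, hw] at hon hc
  ext
  · simp only [rot, hw, Prod.smul_fst, Prod.fst_add, smul_eq_mul]
    rw [hc]
    linear_combination (-k * a) * hon + k * u.1 * hab
  · simp only [rot, hw, Prod.smul_snd, Prod.snd_add, smul_eq_mul]
    rw [hc]
    linear_combination (-k * b) * hon + k * u.2 * hab

lemma residue_unique (C : Config ℓ S B N) {u p q : ℤ × ℤ} {k r s : ℤ} (hu : u ∈ B)
    (hr : 0 ≤ r) (hrl : r < ℓ) (hs : 0 ≤ s) (hsl : s < ℓ)
    (h : ℓ • p = k • u + r • rot (N u)) (h' : ℓ • q = k • u + s • rot (N u)) :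
    p = q ∧ r = s := by
  have e : ℓ • (p - q) = (r - s) • rot (N u) := by
    rw [smul_sub, h, h', sub_smul]; abel
  have := Int.eq_zero_of_abs_lt_dvd (dvd_of_smul (C.coprime u hu) e) (by rw [abs_lt]; omega)
  rw [this, zero_smul] at e
  exact ⟨sub_eq_zero.1 ((smul_eq_zero.1 e).resolve_left C.pos.ne'), by omega⟩

/-- Write `u⁺ = u + rot (N u)`. For each pair `(u, k)` with `u ∈ B`, `0 < k < ℓ`, the residue `r`
decides whether the lattice point `p` at height `k` lies in the cone over `[u, u⁺)` (if `r < k`) or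
the point `u⁺ - p`, of height `ℓ - k`, lies in the cone over `(u, u⁺]` (if `k ≤ r`). Each of the two
cases enumerates the nonzero interior points once. -/
theorem count (C : Config ℓ S B N) :
    2 * ((S \ B).card : ℤ) = (ℓ - 1) * B.card + 2 := by
  classical
  have hpos := C.pos
  choose! P R hP using fun (u : ℤ × ℤ) (hu : u ∈ B) (k : ℤ) => C.exists_residue hu k
  set I := (S \ B).erase 0 with hI
  set X := B ×ˢ Finset.Ioo (0 : ℤ) ℓ with hX
  have c1 : (X.filter fun x => R x.1 x.2 < x.2).card = I.card := by
    refine Finset.card_nbij (fun x => P x.1 x.2) ?_ ?_ ?_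
    · rintro ⟨u, k⟩ hx
      simp only [hX, Finset.coe_filter, Set.mem_ofPred_eq, Finset.mem_product,
        Finset.mem_Ioo] at hx
      obtain ⟨⟨hu, hk, hkl⟩, hR⟩ := hx
      obtain ⟨h1, h2, h3⟩ := hP u hu k
      exact C.mem_inner hu h1 hR.le hk hkl h3
    · rintro ⟨u, k⟩ hx ⟨v, j⟩ hy hxy
      simp only [hX, Finset.coe_filter, Set.mem_ofPred_eq, Finset.mem_product,
        Finset.mem_Ioo] at hx hy hxy
      obtain ⟨⟨hu, hk, hkl⟩, hR⟩ := hx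
      obtain ⟨⟨hv, hj, hjl⟩, hR'⟩ := hy
      obtain ⟨h1, h2, h3⟩ := hP u hu k
      obtain ⟨h1', h2', h3'⟩ := hP v hv j
      rw [← hxy] at h3'
      obtain ⟨a, b⟩ := C.unique_right hu hv h1 hR h1' hR' h3 h3'
      rw [a, b]
    · intro p hp
      obtain ⟨u, hu, k, r, hr, hrk, h⟩ := C.cover p (Finset.ne_of_mem_erase hp)
      have hkl := C.height_lt hu hp h
      obtain ⟨h1, h2, h3⟩ := hP u hu k
      obtain ⟨a, b⟩ := C.residue_unique hu hr (by omega) h1 h2 h h3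
      refine ⟨(u, k), ?_, a.symm⟩
      simp only [hX, Finset.coe_filter, Set.mem_ofPred_eq, Finset.mem_product, Finset.mem_Ioo]
      exact ⟨⟨hu, by omega, hkl⟩, by omega⟩
  have refl : ∀ {u p : ℤ × ℤ} {k r : ℤ}, ℓ • p = k • u + r • rot (N u) →
      ℓ • (u + rot (N u) - p) = (ℓ - k) • u + (ℓ - r) • rot (N u) := by
    intro u p k r h
    rw [smul_sub, h, smul_add, sub_smul, sub_smul]; abel
  have c2 : (X.filter fun x => ¬ R x.1 x.2 < x.2).card = I.card := by
    refine Finset.card_nbij (fun x => x.1 + rot (N x.1) - P x.1 x.2) ?_ ?_ ?_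
    · rintro ⟨u, k⟩ hx
      simp only [hX, Finset.coe_filter, Set.mem_ofPred_eq, Finset.mem_product,
        Finset.mem_Ioo] at hx
      obtain ⟨⟨hu, hk, hkl⟩, hR⟩ := hx
      obtain ⟨h1, h2, h3⟩ := hP u hu k
      exact C.mem_inner hu (by omega) (by omega) (by omega) (by omega) (refl h3)
    · rintro ⟨u, k⟩ hx ⟨v, j⟩ hy hxy
      simp only [hX, Finset.coe_filter, Set.mem_ofPred_eq, Finset.mem_product,
        Finset.mem_Ioo] at hx hy hxy
      obtain ⟨⟨hu, hk, hkl⟩, hR⟩ := hx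
      obtain ⟨⟨hv, hj, hjl⟩, hR'⟩ := hy
      obtain ⟨h1, h2, h3⟩ := hP u hu k
      obtain ⟨h1', h2', h3'⟩ := hP v hv j
      have h4 := refl h3
      have h4' := refl h3'
      rw [← hxy] at h4'
      obtain ⟨a, b⟩ := C.unique_left hu hv (by omega) (by omega) (by omega) (by omega) h4 h4'
      rw [a, show k = j by omega]
    · intro p hp
      obtain ⟨u, hu, k, r, hr, hrk, h⟩ := C.cover_left (Finset.ne_of_mem_erase hp)
      have hkl := C.height_lt hu hp h
      obtain ⟨h1, h2, h3⟩ := hP u hu (ℓ - k)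
      obtain ⟨a, b⟩ := C.residue_unique hu (by omega) (by omega) h1 h2 (refl h) h3
      refine ⟨(u, ℓ - k), ?_, ?_⟩
      · simp only [hX, Finset.coe_filter, Set.mem_ofPred_eq, Finset.mem_product, Finset.mem_Ioo]
        exact ⟨⟨hu, by omega, by omega⟩, by omega⟩
      · simp only [← a]; abel
  have c3 := Finset.card_filter_add_card_filter_not (s := X) (fun x => R x.1 x.2 < x.2)
  have c4 : (X.card : ℤ) = B.card * (ℓ - 1) := by
    rw [hX, Finset.card_product, Int.card_Ioo]
    push_cast
    rw [Int.toNat_of_nonneg (by omega)]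
    ring
  have c5 : I.card + 1 = (S \ B).card :=
    Finset.card_erase_add_one (Finset.mem_sdiff.2 ⟨C.zero_mem, C.zero_notMem⟩)
  rw [c1, c2] at c3
  rw [← c5]
  push_cast
  have : (2 * (I.card : ℤ)) = X.card := by exact_mod_cast (by omega : 2 * I.card = X.card)
  rw [c4] at this
  linarith

end Config

/-! ### Edges of a planar polygon -/

/-- The inclusion `ℤ² ⊆ ℝ²`. -/
def emb (p : ℤ × ℤ) : V := ((p.1 : ℝ), (p.2 : ℝ))

/-- The determinant of two vectors of `ℝ²`. -/
def crV (x y : V) : ℝ := x.1 * y.2 - x.2 * y.1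

lemma emb_injective : Function.Injective emb := by
  intro x y h
  simp only [emb, Prod.mk.injEq, Int.cast_inj] at h
  exact Prod.ext h.1 h.2

lemma emb_zero : emb 0 = 0 := by
  simp [emb]

lemma latticePts_eq : latticePts = range emb := by
  ext x
  exact ⟨fun ⟨p, hp⟩ => ⟨p, hp.symm⟩, fun ⟨p, hp⟩ => ⟨p, hp.symm⟩⟩

lemma dotV_emb (x y : ℤ × ℤ) : dotV (emb x) (emb y) = (dz x y : ℝ) := by
  simp [dotV, emb, dz]

lemma crV_emb (x y : ℤ × ℤ) : crV (emb x) (emb y) = (cr x y : ℝ) := by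
  simp [crV, emb, cr]

lemma dotV_le_of_hull {W : Finset V} {g : V} {c : ℝ} (h : ∀ b ∈ W, dotV g b ≤ c) :
    ∀ y ∈ convexHull ℝ (W : Set V), dotV g y ≤ c := by
  have hc : Convex ℝ {y : V | dotV g y ≤ c} := by
    refine convex_halfSpace_le (f := dotV g) ⟨fun x y => ?_, fun a x => ?_⟩ c
    · simp only [dotV, Prod.fst_add, Prod.snd_add]; ring
    · simp only [dotV, Prod.smul_fst, Prod.smul_snd, smul_eq_mul]; ring
  exact fun y hy => convexHull_min (fun b hb => h b hb) hc hy

lemma exists_pos_smul_mem {Q : Set V} (h0 : (0 : V) ∈ interior Q) (v : V) :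
    ∃ ε : ℝ, 0 < ε ∧ ε • v ∈ Q := by
  have hc : Filter.Tendsto (fun t : ℝ => t • v) (nhds 0) (nhds 0) := by
    have : Continuous fun t : ℝ => t • v := by fun_prop
    simpa using this.tendsto 0
  have h1 := hc.eventually (mem_interior_iff_mem_nhds.1 h0)
  have h2 := (h1.filter_mono nhdsWithin_le_nhds).and
    (self_mem_nhdsWithin : Ioi (0 : ℝ) ∈ nhdsWithin 0 (Ioi 0))
  obtain ⟨ε, h, hε⟩ := h2.exists
  exact ⟨ε, hε, h⟩

lemma exists_smul_mem_of_interior {Q : Set V} {y : V} (hy : y ∈ interior Q) :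
    ∃ t : ℝ, 1 < t ∧ t • y ∈ Q := by
  have hc : Filter.Tendsto (fun t : ℝ => t • y) (nhds 1) (nhds y) := by
    have : Continuous fun t : ℝ => t • y := by fun_prop
    simpa using this.tendsto 1
  have h1 := hc.eventually (mem_interior_iff_mem_nhds.1 hy)
  have h2 := (h1.filter_mono nhdsWithin_le_nhds).and
    (self_mem_nhdsWithin : Ioi (1 : ℝ) ∈ nhdsWithin 1 (Ioi 1))
  obtain ⟨t, h, ht⟩ := h2.exists
  exact ⟨t, ht, h⟩

lemma mem_interior_of_smul_mem {Q : Set V} (hc : Convex ℝ Q) (h0 : (0 : V) ∈ interior Q) {y : V}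
    {t : ℝ} (ht : 1 < t) (h : t • y ∈ Q) : y ∈ interior Q := by
  have hp : 0 < t := by linarith
  refine hc.openSegment_interior_self_subset_interior h0 h
    ⟨1 - t⁻¹, t⁻¹, ?_, by positivity, by ring, ?_⟩
  · have := inv_lt_one_of_one_lt₀ ht
    linarith
  · rw [smul_zero, zero_add, smul_smul, inv_mul_cancel₀ hp.ne', one_smul]

/-- The last point of `Q` on a ray from the origin. -/
lemma exists_last {Q : Set V} (hQ : IsCompact Q) (h0 : (0 : V) ∈ interior Q) {p : V}
    (hp : p ≠ 0) : ∃ c : ℝ, 0 < c ∧ c • p ∈ Q ∧ ∀ t : ℝ, t • p ∈ Q → t ≤ c := by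
  have hK : IsCompact {t : ℝ | t • p ∈ Q} :=
    (isClosedEmbedding_smul_left hp).isCompact_preimage hQ
  obtain ⟨ε, hε, hεQ⟩ := exists_pos_smul_mem h0 p
  obtain ⟨c, hc, hm⟩ := hK.exists_isMaxOn ⟨ε, hεQ⟩ continuous_id.continuousOn
  exact ⟨c, lt_of_lt_of_le hε (hm hεQ), hc, fun t ht => hm ht⟩

lemma dotV_self_pos {q : V} (hq : q ≠ 0) : 0 < dotV q q := by
  have : q.1 ≠ 0 ∨ q.2 ≠ 0 := by
    by_contra! h
    exact hq (Prod.ext h.1 h.2)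
  simp only [dotV]
  rcases this with h | h
  · nlinarith [mul_self_pos.2 h, mul_self_nonneg q.2]
  · nlinarith [mul_self_pos.2 h, mul_self_nonneg q.1]

/-- Through a boundary point `q` there is a supporting line containing a further vertex `a`
counterclockwise from `q`: among the vertices to the left of the ray through `q`, `a` is one which
maximizes the slope as seen from `q`. -/
lemma exists_next_vertex {W : Finset V} (h0 : (0 : V) ∈ interior (convexHull ℝ (W : Set V)))
    {q : V} (hq : q ≠ 0) (hlast : ∀ t : ℝ, t • q ∈ convexHull ℝ (W : Set V) → t ≤ 1) :
    ∃ a ∈ W, 0 < crV q a ∧ ∀ b ∈ W, crV b (a - q) ≤ crV q a := by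
  have hn := dotV_self_pos hq
  have hconv := convex_convexHull ℝ (W : Set V)
  have hne : (W.filter fun a => 0 < crV q a).Nonempty := by
    by_contra hne
    rw [Finset.not_nonempty_iff_eq_empty, Finset.filter_eq_empty_iff] at hne
    have h1 := dotV_le_of_hull (W := W) (g := (-q.2, q.1)) (c := 0) (by
      intro b hb
      have := hne hb
      simp only [crV, dotV] at this ⊢
      linarith)
    obtain ⟨ε, hε, hεQ⟩ := exists_pos_smul_mem h0 ((-q.2, q.1) : V)
    have h2 := h1 _ hεQ
    simp only [dotV, Prod.smul_mk, smul_eq_mul] at h2 hn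
    nlinarith
  obtain ⟨a, ha, hmax⟩ :=
    Finset.exists_max_image _ (fun a => (dotV q a - dotV q q) / crV q a) hne
  obtain ⟨haW, ha0⟩ := Finset.mem_filter.1 ha
  refine ⟨a, haW, ha0, fun b hb => ?_⟩
  -- coordinates with respect to `q` and its rotation reduce the claim to a comparison of slopes
  have hid : dotV q q * (crV q a - crV b (a - q)) =
      (dotV q a - dotV q q) * crV q b - (dotV q b - dotV q q) * crV q a := by
    simp only [dotV, crV, Prod.fst_sub, Prod.snd_sub]; ring
  suffices h : 0 ≤ (dotV q a - dotV q q) * crV q b - (dotV q b - dotV q q) * crV q a by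
    rw [← hid] at h
    have := nonneg_of_mul_nonneg_right h hn
    linarith
  by_cases hb0 : 0 < crV q b
  · have := hmax b (Finset.mem_filter.2 ⟨hb, hb0⟩)
    rw [div_le_div_iff₀ hb0 ha0] at this
    linarith
  · -- the segment from `b` to `a` meets the ray of `q` in a point not beyond `q`
    push Not at hb0
    set d := crV q a - crV q b with hd
    have hdp : 0 < d := by linarith
    have hz : (crV q a / d) • b + (-crV q b / d) • a ∈ convexHull ℝ (W : Set V) :=
      hconv (subset_convexHull ℝ _ hb) (subset_convexHull ℝ _ haW)
        (by positivity) (div_nonneg (by linarith) hdp.le)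
        (by rw [← add_div, ← sub_eq_add_neg, ← hd, div_self hdp.ne'])
    have hzq : (crV q a / d) • b + (-crV q b / d) • a =
        ((crV q a * dotV q b - crV q b * dotV q a) / (d * dotV q q)) • q := by
      ext
      · simp only [Prod.fst_add, Prod.smul_fst, smul_eq_mul]
        field_simp
        simp only [dotV, crV]; ring
      · simp only [Prod.snd_add, Prod.smul_snd, smul_eq_mul]
        field_simp
        simp only [dotV, crV]; ring
    rw [hzq] at hz
    have := hlast _ hz
    rw [div_le_one (by positivity), hd] at this
    linarith

/-- A supporting line at a point `q` of the polygon contains a vertex on either closed side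
of `q`; stated for the clockwise side. -/
lemma exists_prev_vertex {W : Finset V} {q g : V} {c : ℝ}
    (hq : q ∈ convexHull ℝ (W : Set V)) (hg : ∀ b ∈ W, dotV g b ≤ c) (hgq : dotV g q = c) :
    ∃ a ∈ W, dotV g a = c ∧ crV q a ≤ 0 := by
  by_contra! hcon
  obtain ⟨w, hw0, hw1, hwq⟩ := Finset.mem_convexHull'.1 hq
  have lin : ∀ f : V, ∑ y ∈ W, w y * dotV f y = dotV f q := by
    intro f
    have e1 := congrArg Prod.fst hwq
    have e2 := congrArg Prod.snd hwq
    rw [Prod.fst_sum] at e1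
    rw [Prod.snd_sum] at e2
    simp only [dotV]
    rw [← e1, ← e2, Finset.mul_sum, Finset.mul_sum, ← Finset.sum_add_distrib]
    refine Finset.sum_congr rfl fun y _ => ?_
    simp only [Prod.smul_fst, Prod.smul_snd, smul_eq_mul]; ring
  have s1 : ∑ y ∈ W, w y * (c - dotV g y) = 0 := by
    simp only [mul_sub, Finset.sum_sub_distrib]
    rw [← Finset.sum_mul, hw1, lin, hgq]; ring
  have t1 := (Finset.sum_eq_zero_iff_of_nonneg fun y hy =>
    mul_nonneg (hw0 y hy) (sub_nonneg.2 (hg y hy))).1 s1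
  have s2 : ∑ y ∈ W, w y * crV q y = 0 := by
    have := lin (-q.2, q.1)
    simp only [dotV] at this
    rw [show -q.2 * q.1 + q.1 * q.2 = 0 by ring] at this
    rw [← this]
    refine Finset.sum_congr rfl fun y _ => ?_
    simp only [crV]; ring
  have pos : ∀ y ∈ W, w y ≠ 0 → 0 < crV q y := fun y hy hwy =>
    hcon y hy (by have := (mul_eq_zero.1 (t1 y hy)).resolve_left hwy; linarith)
  have nn : ∀ y ∈ W, 0 ≤ w y * crV q y := by
    intro y hy
    by_cases hwy : w y = 0
    · simp [hwy]
    · exact mul_nonneg (hw0 y hy) (pos y hy hwy).le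
  have t2 := (Finset.sum_eq_zero_iff_of_nonneg nn).1 s2
  have : ∑ y ∈ W, w y = 0 := by
    refine Finset.sum_eq_zero fun y hy => ?_
    by_contra hwy
    rcases mul_eq_zero.1 (t2 y hy) with h | h
    · exact hwy h
    · exact (pos y hy hwy).ne' h
  rw [hw1] at this
  exact one_ne_zero this

lemma IsPrimitive.exists_coprime {v : V} (h : IsPrimitive v) :
    ∃ p : ℤ × ℤ, v = emb p ∧ IsCoprime p.1 p.2 := by
  obtain ⟨⟨p, hp⟩, hv0, hseg⟩ := h
  refine ⟨p, hp, ?_⟩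
  rw [Int.isCoprime_iff_gcd_eq_one]
  by_contra hg
  have hp0 : p ≠ 0 := by
    rintro rfl
    exact hv0 (by rw [hp]; simp)
  have hg0 : Int.gcd p.1 p.2 ≠ 0 := by
    intro h
    rw [Int.gcd_eq_zero_iff] at h
    exact hp0 (Prod.ext h.1 h.2)
  set d := Int.gcd p.1 p.2 with hd
  have hd2 : (2 : ℝ) ≤ d := by exact_mod_cast (by omega : 2 ≤ d)
  obtain ⟨x, hx⟩ : (d : ℤ) ∣ p.1 := Int.gcd_dvd_left ..
  obtain ⟨y, hy⟩ : (d : ℤ) ∣ p.2 := Int.gcd_dvd_right ..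
  have hvd : v = (d : ℝ) • emb (x, y) := by
    rw [hp, hx, hy]; simp [emb]
  have hmem : emb (x, y) ∈ segment ℝ (0 : V) v ∩ latticePts := by
    refine ⟨⟨1 - (d : ℝ)⁻¹, (d : ℝ)⁻¹, ?_, by positivity, by ring, ?_⟩, ⟨(x, y), rfl⟩⟩
    · have := inv_le_one_of_one_le₀ (show (1 : ℝ) ≤ d by linarith)
      linarith
    · rw [hvd, smul_zero, zero_add, smul_smul, inv_mul_cancel₀ (by positivity), one_smul]
  rw [hseg] at hmem
  rcases hmem with h | h
  · rw [h, smul_zero] at hvd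
    exact hv0 hvd
  · rw [Set.mem_singleton_iff] at h
    rw [h] at hvd
    have : ((d : ℝ) - 1) • v = 0 := by rw [sub_smul, one_smul, ← hvd, sub_self]
    rcases smul_eq_zero.1 this with h | h
    · linarith
    · exact hv0 h

/-- An `ℓ`-reflexive polygon is the convex hull of finitely many lattice points, its vertices. -/
lemma IsLReflexive.exists_vertices {ℓ : ℕ} {Q : Set V} (hQ : IsLReflexive ℓ Q) :
    ∃ W : Finset V, Q = convexHull ℝ (W : Set V) ∧ ∀ b ∈ W, b ∈ range emb := by
  obtain ⟨A, hA, -⟩ := hQ.polygon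
  have hfin : (extremePoints ℝ Q).Finite := by
    refine A.finite_toSet.subset ?_
    rw [hA]
    exact extremePoints_convexHull_subset
  have hcomp : IsCompact Q := hA ▸ A.finite_toSet.isCompact_convexHull ℝ
  refine ⟨hfin.toFinset, ?_, fun b hb => ?_⟩
  · rw [hfin.coe_toFinset, ← closure_convexHull_extremePoints hcomp (hA ▸ convex_convexHull ℝ _),
      (hfin.isClosed_convexHull ℝ).closure_eq]
    congr 1
    rw [← (hfin.isClosed_convexHull ℝ).closure_eq,
      closure_convexHull_extremePoints hcomp (hA ▸ convex_convexHull ℝ _)]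
  · rw [← latticePts_eq]
    exact (hQ.vertices_primitive b (hfin.mem_toFinset.1 hb)).1

/-- Every ray from the origin leaves an `ℓ`-reflexive polygon through an edge which goes on
counterclockwise; here `η` is its primitive outer normal, and `a`, `a'` are lattice points
on it, after `p` and not after `p` in the counterclockwise order. -/
lemma IsLReflexive.exists_edge {ℓ : ℕ} {Q : Set V} (hℓ : 0 < ℓ) (hQ : IsLReflexive ℓ Q)
    {p : ℤ × ℤ} (hp : p ≠ 0) :
    ∃ η : ℤ × ℤ, IsCoprime η.1 η.2 ∧ (∀ y ∈ Q, dotV (emb η) y ≤ ℓ) ∧ 0 < dz η p ∧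
      (emb p ∈ frontier Q → dz η p = ℓ) ∧ ∃ a a' : ℤ × ℤ, emb a ∈ Q ∧ emb a' ∈ Q ∧
      dz η a = ℓ ∧ dz η a' = ℓ ∧ 0 < cr p a ∧ cr p a' ≤ 0 := by
  obtain ⟨W, hW, hWZ⟩ := hQ.exists_vertices
  have h0 := hQ.zero_mem_interior
  have hcomp : IsCompact Q := hW ▸ W.finite_toSet.isCompact_convexHull ℝ
  have hconv : Convex ℝ Q := hW ▸ convex_convexHull ℝ _
  have hWQ : ∀ b ∈ W, b ∈ Q := fun b hb => hW ▸ subset_convexHull ℝ _ hb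
  have hℓ' : (0 : ℝ) < ℓ := by exact_mod_cast hℓ
  have hp' : emb p ≠ 0 := fun h => hp (emb_injective (h.trans emb_zero.symm))
  obtain ⟨c, hc, hcQ, hclast⟩ := exists_last hcomp h0 hp'
  set q : V := c • emb p with hqdef
  have hq : q ≠ 0 := smul_ne_zero hc.ne' hp'
  obtain ⟨a, haW, hqa, hsup⟩ := exists_next_vertex (W := W) (q := q) (hW ▸ h0) hq (by
    intro t ht
    rw [← hW, hqdef, smul_smul] at ht
    have := hclast _ ht
    nlinarith)
  -- the edge through `q` and `a`, cut out by an inner normal vanishing on `a - q`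
  have hform : ∀ b : V, crV b (a - q) = dotV ((a - q).2, -(a - q).1) b := by
    intro b; simp only [crV, dotV]; ring
  have hsupQ : ∀ y ∈ Q, crV y (a - q) ≤ crV q a := by
    intro y hy
    rw [hW] at hy
    rw [hform]
    exact dotV_le_of_hull (fun b hb => hform b ▸ hsup b hb) y hy
  have hvq : crV q (a - q) = crV q a := by simp only [crV, Prod.fst_sub, Prod.snd_sub]; ring
  have hva : crV a (a - q) = crV q a := by simp only [crV, Prod.fst_sub, Prod.snd_sub]; ring
  set n : V := (-(a - q).2, (a - q).1) with hn
  have hnform : ∀ b : V, dotV n b = -crV b (a - q) := by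
    intro b; simp only [hn, crV, dotV]; ring
  have hedge : IsEdge Q {y ∈ Q | ∀ z ∈ Q, dotV n y ≤ dotV n z} := by
    refine ⟨⟨n, ?_, rfl⟩, q, ⟨hcQ, fun z hz => ?_⟩, a, ⟨hWQ a haW, fun z hz => ?_⟩, ?_⟩
    · intro h
      have := hnform q
      rw [h, hvq] at this
      simp only [dotV, Prod.fst_zero, Prod.snd_zero] at this
      linarith
    · rw [hnform, hnform, hvq]; linarith [hsupQ z hz]
    · rw [hnform, hnform, hva]; linarith [hsupQ z hz]
    · rintro h
      rw [← h] at hqa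
      simp only [crV] at hqa
      linarith
  obtain ⟨ζ, hζ, hζF⟩ := hQ.edge_cond _ hedge
  obtain ⟨ξ, rfl, hξ⟩ := hζ.exists_coprime
  have hζq : dotV (emb ξ) q = -ℓ :=
    hζF ⟨hcQ, fun z hz => by rw [hnform, hnform, hvq]; linarith [hsupQ z hz]⟩
  have hζa : dotV (emb ξ) a = -ℓ :=
    hζF ⟨hWQ a haW, fun z hz => by rw [hnform, hnform, hva]; linarith [hsupQ z hz]⟩
  set η : ℤ × ℤ := -ξ with hη
  have hneg : ∀ y : V, dotV (emb η) y = -dotV (emb ξ) y := by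
    intro y; simp [hη, emb, dotV]; ring
  -- two linear forms which agree up to scale on the basis `q, a`
  have hscale : ∀ y : V, crV q a * dotV (emb η) y = ℓ * crV y (a - q) := by
    intro y
    rw [hneg]
    simp only [crV, dotV, Prod.fst_sub, Prod.snd_sub] at hζq hζa ⊢
    linear_combination (-(y.1 * a.2 - y.2 * a.1)) * hζq + (-(q.1 * y.2 - q.2 * y.1)) * hζa
  have hηsup : ∀ y ∈ Q, dotV (emb η) y ≤ ℓ := by
    intro y hy
    have h1 := hscale y
    have h2 := mul_le_mul_of_nonneg_left (hsupQ y hy) hℓ'.le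
    rw [← h1, mul_comm (ℓ : ℝ)] at h2
    exact le_of_mul_le_mul_left h2 hqa
  have hηq : dotV (emb η) q = ℓ := by rw [hneg, hζq, neg_neg]
  have hηa : dotV (emb η) a = ℓ := by rw [hneg, hζa, neg_neg]
  have hηcp : c * (dz η p : ℝ) = ℓ := by
    rw [← hηq, ← dotV_emb]
    simp only [hqdef, dotV, Prod.smul_fst, Prod.smul_snd, smul_eq_mul]; ring
  have hcrq : ∀ y : V, crV q y = c * crV (emb p) y := by
    intro y
    simp only [hqdef, crV, Prod.smul_fst, Prod.smul_snd, smul_eq_mul]; ring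
  obtain ⟨a', ha'W, hηa', hqa'⟩ := exists_prev_vertex (W := W) (q := q) (g := emb η) (c := ℓ)
    (hW ▸ hcQ) (fun b hb => hηsup b (hWQ b hb)) hηq
  obtain ⟨A, rfl⟩ := hWZ a haW
  obtain ⟨A', rfl⟩ := hWZ a' ha'W
  rw [hcrq, crV_emb] at hqa hqa'
  rw [dotV_emb] at hηa hηa'
  refine ⟨η, by simpa [hη] using hξ.neg_neg, hηsup, ?_, fun hfr => ?_, A, A', hWQ _ haW,
    hWQ _ ha'W, by exact_mod_cast hηa, by exact_mod_cast hηa', ?_, ?_⟩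
  · have : (0 : ℝ) < dz η p := by
      by_contra! h
      nlinarith
    exact_mod_cast this
  · have hpQ : emb p ∈ Q := hcomp.isClosed.frontier_subset hfr
    have hc1 : 1 ≤ c := hclast 1 (by rwa [one_smul])
    rcases hc1.lt_or_eq with h | h
    · exact absurd (mem_interior_of_smul_mem hconv h0 h hcQ) hfr.2
    · rw [← h, one_mul] at hηcp
      exact_mod_cast hηcp
  · have : (0 : ℝ) < cr p A := pos_of_mul_pos_right hqa hc.le
    exact_mod_cast this
  · have : (cr p A' : ℝ) ≤ 0 := by
      by_contra! h
      nlinarith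
    exact_mod_cast this

/-! ### From the polygon to its lattice data -/

lemma finite_lattice_mem {Q : Set V} (hQ : IsCompact Q) : {p : ℤ × ℤ | emb p ∈ Q}.Finite := by
  obtain ⟨M, hM⟩ := hQ.isBounded.exists_norm_le
  have hsub : {p : ℤ × ℤ | emb p ∈ Q} ⊆ Set.Icc (-⌈M⌉) ⌈M⌉ ×ˢ Set.Icc (-⌈M⌉) ⌈M⌉ := by
    intro p hp
    have h := hM _ hp
    have key : ∀ n : ℤ, |(n : ℝ)| ≤ M → n ∈ Set.Icc (-⌈M⌉) ⌈M⌉ := by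
      intro n hn
      have h1 := abs_le.1 (hn.trans (Int.le_ceil M))
      exact ⟨by exact_mod_cast h1.1, by exact_mod_cast h1.2⟩
    exact ⟨key _ ((norm_fst_le (emb p)).trans h), key _ ((norm_snd_le (emb p)).trans h)⟩
  exact ((Set.finite_Icc _ _).prod (Set.finite_Icc _ _)).subset hsub

lemma smul_eq_add_rot {η x y : ℤ × ℤ} {ℓ k : ℤ} (hx : dz η x = ℓ) (hy : dz η y = k) :
    ℓ • y = k • x + cr x y • rot η := by
  subst hx hy
  ext <;> simp only [dz, cr, rot, Prod.fst_add, Prod.snd_add, Prod.smul_fst, Prod.smul_snd,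
    smul_eq_mul] <;> ring

/-- Lattice points on an edge differ by an integral multiple of its primitive direction. -/
lemma exists_edge_mul {η x y : ℤ × ℤ} {ℓ : ℤ} (hℓ : 0 < ℓ) (hη : IsCoprime η.1 η.2)
    (hx : dz η x = ℓ) (hy : dz η y = ℓ) : ∃ n : ℤ, cr x y = ℓ * n ∧ y = x + n • rot η := by
  have h := smul_eq_add_rot hx hy
  obtain ⟨n, hn⟩ := dvd_of_smul (k := ℓ) (v := y - x) hη (by rw [smul_sub, h]; abel)
  refine ⟨n, hn, ?_⟩
  rw [hn, mul_smul, ← smul_add] at h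
  exact smul_right_injective _ hℓ.ne' h

/-- The lattice data of an `ℓ`-reflexive polygon. The edge found on the ray through a boundary
lattice point provides its normal; for the covering property, the edge on the ray through `p` is
also the one chosen at the last lattice point on it at or before that ray. -/
lemma IsLReflexive.exists_config {ℓ : ℕ} {Q : Set V} (hℓ : 0 < ℓ) (hQ : IsLReflexive ℓ Q) :
    ∃ S B N, Config ℓ S B N ∧ (∀ p, p ∈ S ↔ emb p ∈ Q) ∧ ∀ p, p ∈ B ↔ emb p ∈ frontier Q := by
  obtain ⟨W, hW, -⟩ := hQ.exists_vertices
  have h0 := hQ.zero_mem_interior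
  have h0Q : (0 : V) ∈ Q := interior_subset h0
  have hcomp : IsCompact Q := hW ▸ W.finite_toSet.isCompact_convexHull ℝ
  have hconv : Convex ℝ Q := hW ▸ convex_convexHull ℝ _
  have hfr : frontier Q ⊆ Q := hcomp.isClosed.frontier_subset
  have hfinS := finite_lattice_mem hcomp
  have hfinB : {p : ℤ × ℤ | emb p ∈ frontier Q}.Finite := hfinS.subset fun p hp => hfr hp
  have hℓz : (0 : ℤ) < ℓ := by exact_mod_cast hℓ
  have hℓr : (0 : ℝ) < ℓ := by exact_mod_cast hℓ
  choose! N hcop hsup hpos hon hedge using fun (p : ℤ × ℤ) (hp : p ≠ 0) => hQ.exists_edge hℓ hp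
  have hS : ∀ p, p ∈ hfinS.toFinset ↔ emb p ∈ Q := fun p => hfinS.mem_toFinset
  have hB : ∀ p, p ∈ hfinB.toFinset ↔ emb p ∈ frontier Q := fun p => hfinB.mem_toFinset
  have hB0 : ∀ p, emb p ∈ frontier Q → p ≠ 0 := by
    rintro p hp rfl
    rw [emb_zero] at hp
    exact hp.2 h0
  have hsupZ : ∀ p, p ≠ 0 → ∀ y, emb y ∈ Q → dz (N p) y ≤ ℓ := by
    intro p hp y hy
    have := hsup p hp _ hy
    rw [dotV_emb] at this
    exact_mod_cast this
  have hbd : ∀ p, p ≠ 0 → ∀ y, emb y ∈ Q → dz (N p) y = ℓ → emb y ∈ frontier Q := by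
    intro p hp y hy hyl
    rw [hcomp.isClosed.frontier_eq]
    refine ⟨hy, fun hi => ?_⟩
    obtain ⟨t, ht, htQ⟩ := exists_smul_mem_of_interior hi
    have h1 := hsup p hp _ htQ
    have h2 : dotV (emb (N p)) (t • emb y) = t * ℓ := by
      have : ((dz (N p) y : ℤ) : ℝ) = ℓ := by rw [hyl]; simp
      rw [← this, ← dotV_emb]
      simp only [dotV, Prod.smul_fst, Prod.smul_snd, smul_eq_mul]; ring
    nlinarith
  have hcv : ∀ (x y z : ℤ × ℤ) (α β n : ℤ), emb x ∈ Q → emb y ∈ Q → 0 ≤ α → 0 ≤ β → α + β ≤ n →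
      0 < n → n • z = α • x + β • y → emb z ∈ Q := by
    intro x y z α β n hx hy hα hβ hαβ hn h
    have hn' : (0 : ℝ) < n := by exact_mod_cast hn
    have hα' : (0 : ℝ) ≤ α := by exact_mod_cast hα
    have hβ' : (0 : ℝ) ≤ β := by exact_mod_cast hβ
    have hαβ' : (α : ℝ) + β ≤ n := by exact_mod_cast hαβ
    have e1 : (n : ℝ) * z.1 = α * x.1 + β * y.1 := by exact_mod_cast congrArg Prod.fst h
    have e2 : (n : ℝ) * z.2 = α * x.2 + β * y.2 := by exact_mod_cast congrArg Prod.snd h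
    rcases (add_nonneg hα' hβ').lt_or_eq with hs | hs
    · have hm : (α / (α + β) : ℝ) • emb x + (β / (α + β) : ℝ) • emb y ∈ Q :=
        hconv hx hy (by positivity) (by positivity) (by rw [← add_div, div_self hs.ne'])
      have := hconv.smul_mem_of_zero_mem h0Q hm (t := (α + β) / n)
        ⟨by positivity, (div_le_one hn').2 hαβ'⟩
      convert this using 1
      ext
      · simp only [emb, Prod.smul_mk, Prod.mk_add_mk, smul_eq_mul]
        field_simp
        linarith
      · simp only [emb, Prod.smul_mk, Prod.mk_add_mk, smul_eq_mul]
        field_simp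
        linarith
    · have a0 : α = 0 := by
        have : (α : ℝ) = 0 := by linarith
        exact_mod_cast this
      have b0 : β = 0 := by
        have : (β : ℝ) = 0 := by linarith
        exact_mod_cast this
      rw [a0, b0, zero_smul, zero_smul, add_zero] at h
      rw [(smul_eq_zero.1 h).resolve_left hn.ne', emb_zero]
      exact h0Q
  have hnext : ∀ u, emb u ∈ frontier Q → emb (u + rot (N u)) ∈ frontier Q := by
    intro u hu
    have hu0 := hB0 u hu
    obtain ⟨a, -, ha, -, hla, -, hcr, -⟩ := hedge u hu0
    obtain ⟨n, hn, hau⟩ := exists_edge_mul hℓz (hcop u hu0) (hon u hu0 hu) hla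
    have hn0 : 0 < n := by
      rw [hn] at hcr
      exact pos_of_mul_pos_right hcr hℓz.le
    refine hbd u hu0 _
      (hcv u a _ (n - 1) 1 n (hfr hu) ha (by omega) (by omega) (by omega) hn0 ?_) ?_
    · rw [hau, sub_smul, one_smul, one_smul, smul_add]; abel
    · rw [dz_add, dz_rot_self, hon u hu0 hu, add_zero]
  refine ⟨hfinS.toFinset, hfinB.toFinset, N, ⟨hℓz, ?_, ?_, ?_, ?_, ?_, ?_, ?_, ?_, ?_, ?_⟩, hS, hB⟩
  · rw [hS, emb_zero]; exact h0Q
  · rw [hB]; exact fun h => hB0 0 h rfl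
  · intro p hp; rw [hS]; exact hfr ((hB p).1 hp)
  · intro x hx y hy z α β n hα hβ hαβ hn h
    rw [hS] at *
    exact hcv x y z α β n hx hy hα hβ hαβ hn h
  · exact fun u hu => hcop u (hB0 u ((hB u).1 hu))
  · exact fun u hu y hy => hsupZ u (hB0 u ((hB u).1 hu)) y ((hS y).1 hy)
  · exact fun u hu => hon u (hB0 u ((hB u).1 hu)) ((hB u).1 hu)
  · exact fun u hu y hy h => (hB y).2 (hbd u (hB0 u ((hB u).1 hu)) y ((hS y).1 hy) h)
  · exact fun u hu => (hB _).2 (hnext u ((hB u).1 hu))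
  · intro p hp
    obtain ⟨a, a', ha, ha', hla, hla', hcr, hcr'⟩ := hedge p hp
    obtain ⟨M, hM, haM⟩ := exists_edge_mul hℓz (hcop p hp) hla' hla
    have hk := hpos p hp
    have hpa := smul_eq_add_rot hla' (rfl : dz (N p) p = _)
    set k := dz (N p) p with hkdef
    set D := cr a' p with hD
    have hD0 : 0 ≤ D := by
      simp only [hD, cr] at hcr' ⊢; linarith
    have hDM : D < k * M := by
      have h1 : (ℓ : ℤ) * cr p a = ℓ * (k * M - D) := by
        have f1 := congrArg Prod.fst hpa
        have f2 := congrArg Prod.snd hpa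
        have g : cr a' (rot (N p)) = ℓ := by
          rw [← hla']; simp only [cr, rot, dz]; ring
        rw [haM]
        simp only [cr, rot, Prod.fst_add, Prod.snd_add, Prod.smul_fst, Prod.smul_snd,
          smul_eq_mul] at f1 f2 g ⊢
        linear_combination (a'.2 + M * (N p).1) * f1 - (a'.1 - M * (N p).2) * f2 + (k * M - D) * g
      have h2 := mul_left_cancel₀ hℓz.ne' h1
      omega
    -- `u` is the last lattice point on the edge at or before the ray through `p`
    set n := D / k with hn
    have hdiv := Int.emod_add_mul_ediv D k
    have hr0 := Int.emod_nonneg D hk.ne'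
    have hrk := Int.emod_lt_of_pos D hk
    rw [← hn] at hdiv
    have hn0 : 0 ≤ n := Int.ediv_nonneg hD0 hk.le
    have hnM : n < M := by
      by_contra! h
      nlinarith
    set u := a' + n • rot (N p) with hu
    have huQ : emb u ∈ Q := hcv a' a u (M - n) n M ha' ha (by omega) hn0 (by omega) (by omega) (by
      rw [hu, haM]; module)
    have hu1Q : emb (u + rot (N p)) ∈ Q :=
      hcv a' a _ (M - (n + 1)) (n + 1) M ha' ha (by omega) (by omega) (by omega) (by omega) (by
        rw [hu, haM]; module)
    have hul : dz (N p) u = ℓ := by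
      rw [hu, dz_add, dz_smul, dz_rot_self, hla']; ring
    have huB := hbd p hp u huQ hul
    have hu0 := hB0 u huB
    have x1 := hsupZ u hu0 _ hu1Q
    have x2 := hsupZ p hp _ (hfr (hnext u huB))
    rw [dz_add, hon u hu0 huB] at x1
    rw [dz_add, hul, dz_rot_anti] at x2
    have hNN : N p = N u := normal_unique hℓz hul (hon u hu0 huB) (by omega)
    refine ⟨u, (hB u).2 huB, k, D % k, hr0, hrk, ?_⟩
    rw [← hNN, hpa, hu]
    generalize D % k = r at *
    rw [← hdiv]
    module

/-- **Interior lattice-point count** of an ℓ-reflexive polygon. -/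
theorem interior_lattice_point_count (ℓ : ℕ) (hℓ : 0 < ℓ) (Q : Set V)
    (hQ : IsLReflexive ℓ Q) :
    2 * (interior Q ∩ latticePts).ncard
      = (ℓ - 1) * (frontier Q ∩ latticePts).ncard + 2 := by
  classical
  obtain ⟨S, B, N, C, hS, hB⟩ := hQ.exists_config hℓ
  have hclosed : IsClosed Q := by
    obtain ⟨W, rfl, -⟩ := hQ.exists_vertices
    exact W.finite_toSet.isClosed_convexHull ℝ
  have e1 : frontier Q ∩ latticePts = emb '' (B : Set (ℤ × ℤ)) := by
    rw [latticePts_eq]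
    ext x
    constructor
    · rintro ⟨hx, p, rfl⟩
      exact ⟨p, (hB p).2 hx, rfl⟩
    · rintro ⟨p, hp, rfl⟩
      exact ⟨(hB p).1 hp, p, rfl⟩
  have e2 : interior Q ∩ latticePts = emb '' ((S \ B : Finset (ℤ × ℤ)) : Set (ℤ × ℤ)) := by
    rw [latticePts_eq]
    ext x
    constructor
    · rintro ⟨hx, p, rfl⟩
      refine ⟨p, Finset.mem_coe.2 (Finset.mem_sdiff.2 ⟨(hS p).2 (interior_subset hx), ?_⟩), rfl⟩
      exact fun h => ((hB p).1 h).2 hx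
    · rintro ⟨p, hp, rfl⟩
      obtain ⟨h1, h2⟩ := Finset.mem_sdiff.1 (Finset.mem_coe.1 hp)
      rw [hS] at h1
      rw [hB, hclosed.frontier_eq] at h2
      exact ⟨by_contra fun h => h2 ⟨h1, h⟩, p, rfl⟩
  rw [e1, e2, Set.ncard_image_of_injective _ emb_injective,
    Set.ncard_image_of_injective _ emb_injective, Set.ncard_coe_finset, Set.ncard_coe_finset]
  have := C.count
  zify [show 1 ≤ ℓ from hℓ]
  exact this
end
end
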